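/- Let F(a,b,x) = a + bx + f(a,b,x) be a smooth real-valued function on a neighborhood of 0 in ℝ³, where f together with all its first and second order partial derivatives vanishes at the origin. Then there exist a smooth local diffeomorphism (x,y) ↦ (X(x,y), Y(x,y)) of ℝ² fixing the origin, a smooth local diffeomorphism (a,b) ↦ (A(a,b), B(a,b)) of ℝ² fixing the origin, and a smooth function f*(A,B,X) defined near 0 ∈ ℝ³, such that for all (a,b,x) near 0 one has Y(x, F(a,b,x)) = A(a,b) + B(a,b)·X(x, F(a,b,x)) + f*(A(a,b), B(a,b), X(x, F(a,b,x))), and f* satisfies the normal form conditions: (i) f*(A,B,0) = 0 and f*(A,0,X) = 0; (ii) ∂_X f*(A,B,0) = 0 and ∂_B f*(A,0,X) = 0; (iii) ∂⁴f*/∂X²∂B² (A,0,0) = 0; (iv) ∂⁵f*/∂X³∂B² (A,0,0) = 0 and ∂⁵f*/∂X²∂B³ (A,0,0) = 0; (v) ∂⁶f*/∂X³∂B³ (A,0,0) = 0, for all A near 0. -/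

import Mathlib

/- Convergent (smooth) normal form for regular para-CR hypersurfaces
   `y = a + bx + f(a,b,x)`. -/

open Set

/-- `Φ` is a smooth local diffeomorphism at `0 ∈ ℝ²` fixing the origin. -/
def SmoothLocalDiffeoAtZero (Φ : ℝ × ℝ → ℝ × ℝ) : Prop :=
  ∃ V : Set (ℝ × ℝ), V ∈ nhds (0 : ℝ × ℝ) ∧ Φ 0 = 0 ∧
    ContDiffOn ℝ (⊤ : ℕ∞) Φ V ∧ InjOn Φ V ∧ IsOpen (Φ '' V) ∧
    ∃ Φinv : ℝ × ℝ → ℝ × ℝ,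
      ContDiffOn ℝ (⊤ : ℕ∞) Φinv (Φ '' V) ∧ ∀ p ∈ V, Φinv (Φ p) = p

section

open Set Filter Topology
open scoped ContDiff

namespace PCR

/-- smooth in a neighbourhood of the point -/
def SM {E F : Type*} [NormedAddCommGroup E] [NormedSpace ℝ E] [NormedAddCommGroup F]
    [NormedSpace ℝ F] (f : E → F) (p : E) : Prop :=
  ∀ᶠ q in 𝓝 p, ContDiffAt ℝ ∞ f q

section basics
variable {E F G : Type*} [NormedAddCommGroup E] [NormedSpace ℝ E] [NormedAddCommGroup F]
    [NormedSpace ℝ F] [NormedAddCommGroup G] [NormedSpace ℝ G]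

theorem SM.self {f : E → F} {p : E} (h : SM f p) : ContDiffAt ℝ ∞ f p := h.self_of_nhds

theorem SM.diff {f : E → F} {p : E} (h : SM f p) : DifferentiableAt ℝ f p :=
  h.self.differentiableAt (by simp)

theorem SM.cont {f : E → F} {p : E} (h : SM f p) : ContinuousAt f p := h.self.continuousAt

theorem SM.ev {f : E → F} {p : E} (h : SM f p) : ∀ᶠ q in 𝓝 p, SM f q :=
  eventually_eventually_nhds.2 h

theorem SM.of_contDiff {f : E → F} {p : E} (h : ContDiff ℝ ∞ f) : SM f p :=
  Eventually.of_forall fun _ => h.contDiffAt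

theorem SM.congr {f g : E → F} {p : E} (h : SM f p) (e : g =ᶠ[𝓝 p] f) : SM g p := by
  filter_upwards [h, e.eventuallyEq_nhds] with q hq eq
  exact hq.congr_of_eventuallyEq eq

theorem SM.comp {g : F → G} {f : E → F} {p : E} (hg : SM g (f p)) (hf : SM f p) :
    SM (fun x => g (f x)) p := by
  filter_upwards [hf, hf.cont.eventually hg] with q h1 h2
  exact h2.comp q h1

theorem SM.comp' {g : F → G} {f : E → F} {p : E} {y : F} (hg : SM g y) (hf : SM f p)
    (hy : f p = y) : SM (fun x => g (f x)) p := by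
  subst hy; exact hg.comp hf

theorem SM.prodMk {f : E → F} {g : E → G} {p : E} (hf : SM f p) (hg : SM g p) :
    SM (fun x => (f x, g x)) p := by
  filter_upwards [hf, hg] with q h1 h2 using h1.prodMk h2

theorem SM.fst {f : E → F × G} {p : E} (hf : SM f p) : SM (fun x => (f x).1) p := by
  filter_upwards [hf] with q h1 using h1.fst

theorem SM.snd {f : E → F × G} {p : E} (hf : SM f p) : SM (fun x => (f x).2) p := by
  filter_upwards [hf] with q h1 using h1.snd

theorem SM.const {p : E} (c : F) : SM (fun _ : E => c) p := SM.of_contDiff contDiff_const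

theorem SM.id {p : E} : SM (fun x : E => x) p := SM.of_contDiff contDiff_id

theorem SM.add {f g : E → F} {p : E} (hf : SM f p) (hg : SM g p) :
    SM (fun x => f x + g x) p := by
  filter_upwards [hf, hg] with q h1 h2 using h1.add h2

theorem SM.sub {f g : E → F} {p : E} (hf : SM f p) (hg : SM g p) :
    SM (fun x => f x - g x) p := by
  filter_upwards [hf, hg] with q h1 h2 using h1.sub h2

theorem SM.neg {f : E → F} {p : E} (hf : SM f p) :
    SM (fun x => - f x) p := by
  filter_upwards [hf] with q h1 using h1.neg

theorem SM.mul {f g : E → ℝ} {p : E} (hf : SM f p) (hg : SM g p) :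
    SM (fun x => f x * g x) p := by
  filter_upwards [hf, hg] with q h1 h2 using h1.mul h2

theorem SM.pow {f : E → ℝ} {p : E} (hf : SM f p) (n : ℕ) :
    SM (fun x => f x ^ n) p := by
  filter_upwards [hf] with q h1 using h1.pow n

theorem SM.div {f g : E → ℝ} {p : E} (hf : SM f p) (hg : SM g p) (h0 : g p ≠ 0) :
    SM (fun x => f x / g x) p := by
  filter_upwards [hf, hg, hg.cont.eventually_ne h0] with q h1 h2 h3 using h1.div h2 h3

theorem SM.exp {f : E → ℝ} {p : E} (hf : SM f p) : SM (fun x => Real.exp (f x)) p := by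
  filter_upwards [hf] with q h1 using h1.exp

theorem SM.pd {f : E → F} {p : E} (hf : SM f p) (v : E) :
    SM (fun x => fderiv ℝ f x v) p := by
  filter_upwards [hf] with q h1
  exact (h1.fderiv_right (m := ∞) (by simp)).clm_apply contDiffAt_const

theorem SM.deriv {f : ℝ → F} {p : ℝ} (hf : SM f p) : SM (deriv f) p := by
  have := hf.pd 1
  exact this

theorem SM.fderiv {f : E → F} {p : E} (hf : SM f p) : SM (fderiv ℝ f) p := by
  filter_upwards [hf] with q h1
  exact (h1.fderiv_right (m := ∞) (by simp))

theorem pd_comm {f : E → F} {p : E} (hf : SM f p) (v w : E) :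
    fderiv ℝ (fun x => fderiv ℝ f x v) p w = fderiv ℝ (fun x => fderiv ℝ f x w) p v := by
  have hs : IsSymmSndFDerivAt ℝ f p := hf.self.isSymmSndFDerivAt (by simp only [minSmoothness_of_isRCLikeNormedField]; exact WithTop.coe_le_coe.2 le_top)
  have hd : DifferentiableAt ℝ (_root_.fderiv ℝ f) p := hf.fderiv.diff
  have key : ∀ u : E, fderiv ℝ (fun x => fderiv ℝ f x u) p = (fderiv ℝ (fderiv ℝ f) p).flip u := by
    intro u
    ext z
    rw [fderiv_clm_apply hd (differentiableAt_const u)]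
    simp
  rw [key, key]
  exact hs.eq w v

theorem pd_congr {f g : E → F} {p : E} (e : f =ᶠ[𝓝 p] g) (v : E) :
    (fun x => fderiv ℝ f x v) =ᶠ[𝓝 p] (fun x => fderiv ℝ g x v) := by
  filter_upwards [e.eventuallyEq_nhds] with q hq
  rw [hq.fderiv_eq]

end basics

/-- partial derivatives, two variables -/
noncomputable def E1 (f : ℝ × ℝ → ℝ) (p : ℝ × ℝ) : ℝ := fderiv ℝ f p (1, 0)
noncomputable def E2 (f : ℝ × ℝ → ℝ) (p : ℝ × ℝ) : ℝ := fderiv ℝ f p (0, 1)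
/-- partial derivatives, three variables -/
noncomputable def D1 (f : ℝ × ℝ × ℝ → ℝ) (p : ℝ × ℝ × ℝ) : ℝ := fderiv ℝ f p (1, 0, 0)
noncomputable def D2 (f : ℝ × ℝ × ℝ → ℝ) (p : ℝ × ℝ × ℝ) : ℝ := fderiv ℝ f p (0, 1, 0)
noncomputable def D3 (f : ℝ × ℝ × ℝ → ℝ) (p : ℝ × ℝ × ℝ) : ℝ := fderiv ℝ f p (0, 0, 1)

theorem SM.E1 {f : ℝ × ℝ → ℝ} {p : ℝ × ℝ} (h : SM f p) : SM (E1 f) p := h.pd _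
theorem SM.E2 {f : ℝ × ℝ → ℝ} {p : ℝ × ℝ} (h : SM f p) : SM (E2 f) p := h.pd _
theorem SM.D1 {f : ℝ × ℝ × ℝ → ℝ} {p : ℝ × ℝ × ℝ} (h : SM f p) : SM (D1 f) p := h.pd _
theorem SM.D2 {f : ℝ × ℝ × ℝ → ℝ} {p : ℝ × ℝ × ℝ} (h : SM f p) : SM (D2 f) p := h.pd _
theorem SM.D3 {f : ℝ × ℝ × ℝ → ℝ} {p : ℝ × ℝ × ℝ} (h : SM f p) : SM (D3 f) p := h.pd _

theorem D23_comm {f : ℝ × ℝ × ℝ → ℝ} {p : ℝ × ℝ × ℝ} (h : SM f p) :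
    D2 (D3 f) p = D3 (D2 f) p := pd_comm h _ _

theorem D23_comm_ev {f : ℝ × ℝ × ℝ → ℝ} {p : ℝ × ℝ × ℝ} (h : SM f p) :
    D2 (D3 f) =ᶠ[𝓝 p] D3 (D2 f) := by
  filter_upwards [h.ev] with q hq using D23_comm hq

theorem D2_congr {f g : ℝ × ℝ × ℝ → ℝ} {p : ℝ × ℝ × ℝ} (h : f =ᶠ[𝓝 p] g) :
    D2 f =ᶠ[𝓝 p] D2 g := pd_congr h _
theorem D3_congr {f g : ℝ × ℝ × ℝ → ℝ} {p : ℝ × ℝ × ℝ} (h : f =ᶠ[𝓝 p] g) :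
    D3 f =ᶠ[𝓝 p] D3 g := pd_congr h _

theorem fderiv2 (f : ℝ × ℝ → ℝ) (p : ℝ × ℝ) (u v : ℝ) :
    fderiv ℝ f p (u, v) = E1 f p * u + E2 f p * v := by
  have : ((u, v) : ℝ × ℝ) = u • (1, 0) + v • (0, 1) := by simp
  rw [this, map_add, map_smul, map_smul]; simp [E1, E2, mul_comm]

theorem fderiv3 (f : ℝ × ℝ × ℝ → ℝ) (p : ℝ × ℝ × ℝ) (u v w : ℝ) :
    fderiv ℝ f p (u, v, w) = D1 f p * u + D2 f p * v + D3 f p * w := by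
  have : ((u, v, w) : ℝ × ℝ × ℝ) = u • (1, 0, 0) + v • (0, 1, 0) + w • (0, 0, 1) := by simp
  rw [this, map_add, map_add, map_smul, map_smul, map_smul]; simp [D1, D2, D3, mul_comm]

theorem chain2 {f : ℝ × ℝ → ℝ} {c1 c2 : ℝ → ℝ} {t d1 d2 : ℝ}
    (hf : SM f (c1 t, c2 t)) (h1 : HasDerivAt c1 d1 t) (h2 : HasDerivAt c2 d2 t) :
    HasDerivAt (fun s => f (c1 s, c2 s)) (E1 f (c1 t, c2 t) * d1 + E2 f (c1 t, c2 t) * d2) t := by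
  rw [← fderiv2]
  exact hf.diff.hasFDerivAt.comp_hasDerivAt t (h1.prodMk h2)

theorem chain3 {f : ℝ × ℝ × ℝ → ℝ} {c1 c2 c3 : ℝ → ℝ} {t d1 d2 d3 : ℝ}
    (hf : SM f (c1 t, c2 t, c3 t)) (h1 : HasDerivAt c1 d1 t) (h2 : HasDerivAt c2 d2 t)
    (h3 : HasDerivAt c3 d3 t) :
    HasDerivAt (fun s => f (c1 s, c2 s, c3 s)) (D1 f (c1 t, c2 t, c3 t) * d1
      + D2 f (c1 t, c2 t, c3 t) * d2 + D3 f (c1 t, c2 t, c3 t) * d3) t := by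
  rw [← fderiv3]
  exact hf.diff.hasFDerivAt.comp_hasDerivAt t (h1.prodMk (h2.prodMk h3))

/-- inverse function theorem -/
theorem ift {E : Type*} [NormedAddCommGroup E] [NormedSpace ℝ E] [FiniteDimensional ℝ E]
    {f : E → E} {p : E} (hf : SM f p) (hinj : ∀ v, fderiv ℝ f p v = 0 → v = 0) :
    ∃ g : E → E, SM g (f p) ∧ g (f p) = p ∧ (∀ᶠ x in 𝓝 p, g (f x) = x) ∧
      (∀ᶠ y in 𝓝 (f p), f (g y) = y) := by
  have : CompleteSpace E := FiniteDimensional.complete ℝ E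
  have hi : Function.Injective (fderiv ℝ f p : E →ₗ[ℝ] E) :=
    (injective_iff_map_eq_zero _).2 hinj
  let e : E ≃L[ℝ] E := (LinearEquiv.ofInjectiveEndo _ hi).toContinuousLinearEquiv
  have he : (e : E →L[ℝ] E) = fderiv ℝ f p := by ext x; rfl
  have hfd : HasFDerivAt f (e : E →L[ℝ] E) p := by rw [he]; exact hf.diff.hasFDerivAt
  have hst : HasStrictFDerivAt f (e : E →L[ℝ] E) p := hf.self.hasStrictFDerivAt' hfd (by simp)
  set R := hst.toOpenPartialHomeomorph f with hR
  have hRf : ∀ x, R x = f x := fun x => rfl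
  have hps : p ∈ R.source := hst.mem_toOpenPartialHomeomorph_source
  have hpt : f p ∈ R.target := hst.image_mem_toOpenPartialHomeomorph_target
  have hg0 : R.symm (f p) = p := R.left_inv hps
  have hcont : ContinuousAt R.symm (f p) := R.symm.continuousAt hpt
  refine ⟨R.symm, ?_, hg0, ?_, ?_⟩
  · have h1 : ∀ᶠ x in 𝓝 p, fderiv ℝ f x ∈ range ((↑) : (E ≃L[ℝ] E) → E →L[ℝ] E) := by
      have hc : ContinuousAt (fderiv ℝ f) p := hf.fderiv.cont
      apply hc.eventually
      rw [← he]
      exact ContinuousLinearEquiv.nhds e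
    have h2 := hcont.eventually (by rw [hg0]; exact h1.and hf)
    filter_upwards [h2, R.open_target.mem_nhds hpt] with y hy hyt
    obtain ⟨⟨e', he'⟩, hs⟩ := hy
    have hd : HasFDerivAt R (e' : E →L[ℝ] E) (R.symm y) := by
      rw [he']; exact (hs.differentiableAt (by simp)).hasFDerivAt
    exact R.contDiffAt_symm hyt hd hs
  · filter_upwards [R.open_source.mem_nhds hps] with x hx using R.left_inv hx
  · filter_upwards [R.open_target.mem_nhds hpt] with x hx using R.right_inv hx

/-- implicit function theorem -/
theorem implicit {W : Type*} [NormedAddCommGroup W] [NormedSpace ℝ W] [FiniteDimensional ℝ W]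
    {e : W × ℝ → ℝ} (he : SM e 0) (h0 : e 0 = 0) (hd : fderiv ℝ e 0 (0, 1) ≠ 0) :
    ∃ G : W → ℝ, SM G 0 ∧ G 0 = 0 ∧ ∀ᶠ q : W × ℝ in 𝓝 0, (e q = 0 ↔ q.2 = G q.1) := by
  let f : W × ℝ → W × ℝ := fun q => (q.1, e q)
  have hf : SM f 0 := SM.id.fst.prodMk he
  have hfd : ∀ v, fderiv ℝ f 0 v = (v.1, fderiv ℝ e 0 v) := by
    intro v
    have : HasFDerivAt f ((ContinuousLinearMap.fst ℝ W ℝ).prod (fderiv ℝ e 0)) 0 :=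
      (hasFDerivAt_fst).prodMk he.diff.hasFDerivAt
    rw [this.fderiv]; rfl
  have hf0 : f 0 = 0 := by simp [f, h0]
  obtain ⟨g, hg, hg0, hgf, hfg⟩ := ift hf (by
    rintro ⟨w, y⟩ hv
    rw [hfd] at hv
    obtain ⟨h1, h2⟩ := Prod.mk.inj hv
    simp only at h1 h2
    subst h1
    have : ((0 : W), y) = y • ((0 : W), (1 : ℝ)) := by simp
    rw [this, map_smul, smul_eq_mul] at h2
    rcases mul_eq_zero.1 h2 with h | h
    · simp [h]
    · exact absurd h hd)
  rw [hf0] at hg hg0 hfg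
  refine ⟨fun w => (g (w, 0)).2, ?_, ?_, ?_⟩
  · have : SM (fun w : W => g (w, 0)) 0 := hg.comp' (SM.id.prodMk (SM.const 0)) (by simp)
    exact this.snd
  · have : ((0 : W), (0 : ℝ)) = 0 := rfl
    simp [this, hg0]
  · have hc : ContinuousAt (fun q : W × ℝ => (q.1, (0 : ℝ))) 0 := by fun_prop
    have h3 : ∀ᶠ q : W × ℝ in 𝓝 0, f (g (q.1, 0)) = (q.1, 0) := by
      apply hc.eventually (p := fun y => f (g y) = y)
      exact hfg
    filter_upwards [hgf, h3] with q h1 h2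
    constructor
    · intro hq
      have : f q = (q.1, 0) := by simp [f, hq]
      rw [this] at h1
      rw [h1]
    · intro hq
      obtain ⟨a, b⟩ := Prod.mk.inj h2
      have : g (q.1, 0) = q := Prod.ext a hq.symm
      rw [this] at b
      exact b

/-- smooth solutions of autonomous ODE -/
theorem ode {E : Type*} [NormedAddCommGroup E] [NormedSpace ℝ E] [CompleteSpace E]
    {V : E → E} {z : E} (hV : SM V z) :
    ∃ α : ℝ → E, SM α 0 ∧ α 0 = z ∧ ∀ᶠ t in 𝓝 (0 : ℝ), HasDerivAt α (V (α t)) t := by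
  obtain ⟨α, h0, ε, hε, hα⟩ := (hV.self.of_le (m := 1)
    (by simp)).exists_forall_mem_closedBall_exists_eq_forall_mem_Ioo_hasDerivAt₀ 0
  have hα0 : ∀ᶠ t in 𝓝 (0 : ℝ), HasDerivAt α (V (α t)) t := by
    filter_upwards [Ioo_mem_nhds (show (0 : ℝ) - ε < 0 by linarith) (show 0 < 0 + ε by linarith)]
      with t ht using hα t ht
  refine ⟨α, ?_, h0, hα0⟩
  have hc : ContinuousAt α 0 := hα0.self_of_nhds.continuousAt
  have hev : ∀ᶠ t in 𝓝 (0 : ℝ), HasDerivAt α (V (α t)) t ∧ ContDiffAt ℝ ∞ V (α t) :=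
    hα0.and (hc.eventually (by rw [h0]; exact hV))
  obtain ⟨U, hU, hUo, h0U⟩ := mem_nhds_iff.1 hev
  have key : ∀ n : ℕ, ContDiffOn ℝ n α U := by
    intro n
    induction n with
    | zero =>
      simp only [CharP.cast_eq_zero, contDiffOn_zero]
      exact fun t ht => (hU ht).1.continuousAt.continuousWithinAt
    | succ n ih =>
      have := (contDiffOn_succ_iff_deriv_of_isOpen (𝕜 := ℝ) (n := n) (f := α) hUo).2
        ⟨fun t ht => (hU ht).1.differentiableAt.differentiableWithinAt, by simp, ?_⟩
      · exact_mod_cast this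
      · have h2 : ContDiffOn ℝ n (fun t => V (α t)) U := fun t ht =>
          ((hU ht).2.of_le (by exact_mod_cast le_top)).comp_contDiffWithinAt t (ih t ht)
        exact h2.congr fun t ht => (hU ht).1.deriv
  filter_upwards [hUo.mem_nhds h0U] with t ht
  exact ((contDiffOn_infty.2 key) t ht).contDiffAt (hUo.mem_nhds ht)

end PCR

namespace PCR

open Asymptotics in
theorem polyo {d0 d1 d2 d3 : ℝ}
    (h : (fun B : ℝ => d0 + d1 * B + d2 * B ^ 2 + d3 * B ^ 3) =o[𝓝 0] fun B => B ^ 3) :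
    d0 = 0 ∧ d1 = 0 ∧ d2 = 0 ∧ d3 = 0 := by
  have h' : Tendsto (fun B : ℝ => (d0 + d1 * B + d2 * B ^ 2 + d3 * B ^ 3) / B ^ 3) (𝓝[≠] 0) (𝓝 0) :=
    (h.mono nhdsWithin_le_nhds).tendsto_div_nhds_zero
  have hne : ∀ᶠ B : ℝ in 𝓝[≠] 0, B ≠ 0 := eventually_mem_nhdsWithin
  have lim : ∀ (P : ℝ → ℝ) (n : ℕ), Continuous P →
      (fun B : ℝ => (d0 + d1 * B + d2 * B ^ 2 + d3 * B ^ 3) / B ^ 3) =ᶠ[𝓝[≠] 0]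
        (fun B => P B / B ^ n) → P 0 = 0 := by
    intro P n hP e
    have h1 := h'.congr' e
    have h2 : Tendsto (fun B : ℝ => B ^ n) (𝓝[≠] 0) (𝓝 (0 ^ n)) :=
      (((continuous_pow n).tendsto 0)).mono_left nhdsWithin_le_nhds
    have h3 := h1.mul h2
    have h4 : Tendsto P (𝓝[≠] 0) (𝓝 (0 * 0 ^ n)) := by
      refine h3.congr' ?_
      filter_upwards [hne] with B hB
      field_simp
    have h5 : Tendsto P (𝓝[≠] 0) (𝓝 (P 0)) := hP.continuousAt.mono_left nhdsWithin_le_nhds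
    simpa using tendsto_nhds_unique h5 h4
  have e0 : d0 = 0 := by
    have := lim (fun B => d0 + d1 * B + d2 * B ^ 2 + d3 * B ^ 3) 3 (by fun_prop) (by rfl)
    norm_num at this; exact this
  have e1 : d1 = 0 := by
    have := lim (fun B => d1 + d2 * B + d3 * B ^ 2) 2 (by fun_prop) (by
      filter_upwards [hne] with B hB
      rw [e0]; field_simp; ring)
    norm_num at this; exact this
  have e2 : d2 = 0 := by
    have := lim (fun B => d2 + d3 * B) 1 (by fun_prop) (by
      filter_upwards [hne] with B hB
      rw [e0, e1]; field_simp; ring)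
    norm_num at this; exact this
  have e3 : d3 = 0 := by
    have := lim (fun B => d3) 0 (by fun_prop) (by
      filter_upwards [hne] with B hB
      rw [e0, e1, e2]; field_simp; ring)
    exact this
  exact ⟨e0, e1, e2, e3⟩

open Asymptotics in
theorem taylor3 {φ : ℝ → ℝ} {t : ℝ} (h : SM φ t) :
    (fun x => φ x - (φ t + deriv φ t * (x - t) + iteratedDeriv 2 φ t / 2 * (x - t) ^ 2
      + iteratedDeriv 3 φ t / 6 * (x - t) ^ 3)) =o[𝓝 t] fun x => (x - t) ^ 3 := by
  obtain ⟨ε, hε, hb⟩ := Metric.eventually_nhds_iff_ball.1 h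
  have hm : t ∈ Metric.ball t ε := Metric.mem_ball_self hε
  have hs : ContDiffOn ℝ (3 : ℕ) φ (Metric.ball t ε) := fun x hx =>
    ((hb x hx).of_le (WithTop.coe_le_coe.2 le_top)).contDiffWithinAt
  have h1 := taylor_isLittleO (convex_ball t ε) hm hs
  rw [Metric.isOpen_ball.nhdsWithin_eq hm] at h1
  refine h1.congr_left fun x => ?_
  have e : ∀ n, iteratedDerivWithin n φ (Metric.ball t ε) t = iteratedDeriv n φ t := fun n =>
    iteratedDerivWithin_of_isOpen Metric.isOpen_ball hm
  simp only [taylorWithinEval_succ, taylor_within_zero_eval, e, smul_eq_mul]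
  norm_num [Nat.factorial]
  ring

open Asymptotics in
theorem taylor3_unique {φ : ℝ → ℝ} (h : SM φ 0) {c0 c1 c2 c3 : ℝ}
    (ho : (fun B => φ B - (c0 + c1 * B + c2 * B ^ 2 + c3 * B ^ 3)) =o[𝓝 0] fun B => B ^ 3) :
    φ 0 = c0 ∧ deriv φ 0 = c1 ∧ iteratedDeriv 2 φ 0 = 2 * c2 ∧ iteratedDeriv 3 φ 0 = 6 * c3 := by
  have h1 := taylor3 h
  simp only [sub_zero] at h1
  have h2 := ho.sub h1
  have h3 := polyo (d0 := φ 0 - c0) (d1 := deriv φ 0 - c1) (d2 := iteratedDeriv 2 φ 0 / 2 - c2)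
    (d3 := iteratedDeriv 3 φ 0 / 6 - c3) (h2.congr_left fun B => by ring)
  obtain ⟨a, b, c, d⟩ := h3
  refine ⟨?_, ?_, ?_, ?_⟩ <;> linarith

theorem ev_comp {α β : Type*} [TopologicalSpace α] [TopologicalSpace β] {P : β → Prop} {b : β}
    (h : ∀ᶠ q in 𝓝 b, P q) {m : α → β} {a : α} (hm : ContinuousAt m a) (h0 : m a = b) :
    ∀ᶠ x in 𝓝 a, P (m x) := by
  subst h0; exact hm.eventually h

theorem slice1 {F : ℝ × ℝ × ℝ → ℝ} {a b x : ℝ} (h : SM F (a, b, x)) :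
    HasDerivAt (fun s => F (s, b, x)) (D1 F (a, b, x)) a := by
  have := chain3 (c1 := fun s => s) (c2 := fun _ => b) (c3 := fun _ => x) (t := a) h
    (hasDerivAt_id a) (hasDerivAt_const a b) (hasDerivAt_const a x)
  simpa using this

theorem slice2 {F : ℝ × ℝ × ℝ → ℝ} {a b x : ℝ} (h : SM F (a, b, x)) :
    HasDerivAt (fun s => F (a, s, x)) (D2 F (a, b, x)) b := by
  have := chain3 (c1 := fun _ => a) (c2 := fun s => s) (c3 := fun _ => x) (t := b) h
    (hasDerivAt_const b a) (hasDerivAt_id' b) (hasDerivAt_const b x)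
  simpa using this

theorem slice3 {F : ℝ × ℝ × ℝ → ℝ} {a b x : ℝ} (h : SM F (a, b, x)) :
    HasDerivAt (fun s => F (a, b, s)) (D3 F (a, b, x)) x := by
  have := chain3 (c1 := fun _ => a) (c2 := fun _ => b) (c3 := fun s => s) (t := x) h
    (hasDerivAt_const x a) (hasDerivAt_const x b) (hasDerivAt_id' x)
  simpa using this

theorem slice21 {F : ℝ × ℝ → ℝ} {a b : ℝ} (h : SM F (a, b)) :
    HasDerivAt (fun s => F (s, b)) (E1 F (a, b)) a := by
  have := chain2 (c1 := fun s => s) (c2 := fun _ => b) (t := a) h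
    (hasDerivAt_id a) (hasDerivAt_const a b)
  simpa using this

theorem slice22 {F : ℝ × ℝ → ℝ} {a b : ℝ} (h : SM F (a, b)) :
    HasDerivAt (fun s => F (a, s)) (E2 F (a, b)) b := by
  have := chain2 (c1 := fun _ => a) (c2 := fun s => s) (t := b) h
    (hasDerivAt_const b a) (hasDerivAt_id' b)
  simpa using this

/-- eventual facts on slices -/
theorem ev1 {P : ℝ × ℝ × ℝ → Prop} {a b x : ℝ} (h : ∀ᶠ p in 𝓝 (a, b, x), P p) :
    ∀ᶠ s in 𝓝 a, P (s, b, x) := ev_comp h (by fun_prop) rfl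
theorem ev2 {P : ℝ × ℝ × ℝ → Prop} {a b x : ℝ} (h : ∀ᶠ p in 𝓝 (a, b, x), P p) :
    ∀ᶠ s in 𝓝 b, P (a, s, x) := ev_comp h (m := fun s => (a, s, x)) (by fun_prop) rfl
theorem ev3 {P : ℝ × ℝ × ℝ → Prop} {a b x : ℝ} (h : ∀ᶠ p in 𝓝 (a, b, x), P p) :
    ∀ᶠ s in 𝓝 x, P (a, b, s) := ev_comp h (m := fun s => (a, b, s)) (by fun_prop) rfl

/-- a pair of mutually inverse local diffeomorphisms of the plane fixing the origin -/
structure LDP (Φ Φ' : ℝ × ℝ → ℝ × ℝ) : Prop where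
  sm : SM Φ 0
  sm' : SM Φ' 0
  z : Φ 0 = 0
  z' : Φ' 0 = 0
  li : ∀ᶠ p in 𝓝 0, Φ' (Φ p) = p
  ri : ∀ᶠ p in 𝓝 0, Φ (Φ' p) = p

theorem LDP.symm {Φ Φ' : ℝ × ℝ → ℝ × ℝ} (h : LDP Φ Φ') : LDP Φ' Φ :=
  ⟨h.sm', h.sm, h.z', h.z, h.ri, h.li⟩

theorem LDP.comp {Φ Φ' Ψ Ψ' : ℝ × ℝ → ℝ × ℝ} (h : LDP Φ Φ') (k : LDP Ψ Ψ') :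
    LDP (fun p => Ψ (Φ p)) (fun p => Φ' (Ψ' p)) := by
  refine ⟨k.sm.comp' h.sm h.z, h.sm'.comp' k.sm' k.z', by simp [h.z, k.z], by simp [h.z', k.z'],
    ?_, ?_⟩
  · filter_upwards [ev_comp k.li h.sm.cont h.z, h.li] with p h1 h2
    rw [h1, h2]
  · filter_upwards [ev_comp h.ri k.sm'.cont k.z', k.ri] with p h1 h2
    rw [h1, h2]

theorem LDP.mk' {f g : ℝ × ℝ → ℝ} (hf : SM f 0) (hg : SM g 0) (f0 : f 0 = 0) (g0 : g 0 = 0)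
    (det : E1 f 0 * E2 g 0 - E2 f 0 * E1 g 0 ≠ 0) :
    ∃ Φ', LDP (fun p => (f p, g p)) Φ' := by
  have hs := hf.prodMk hg
  have h0 : (f 0, g 0) = (0 : ℝ × ℝ) := by rw [f0, g0]; rfl
  obtain ⟨Φ', h1, h2, h3, h4⟩ := ift hs (by
    rintro ⟨u, v⟩ huv
    rw [hf.diff.fderiv_prodMk hg.diff] at huv
    simp only [ContinuousLinearMap.prod_apply, fderiv2, Prod.mk_eq_zero] at huv
    obtain ⟨e1, e2⟩ := huv
    have hu : u * (E1 f 0 * E2 g 0 - E2 f 0 * E1 g 0) = 0 := by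
      linear_combination E2 g 0 * e1 - E2 f 0 * e2
    have hv : v * (E1 f 0 * E2 g 0 - E2 f 0 * E1 g 0) = 0 := by
      linear_combination E1 f 0 * e2 - E1 g 0 * e1
    have hu' := (mul_eq_zero.1 hu).resolve_right det
    have hv' := (mul_eq_zero.1 hv).resolve_right det
    rw [hu', hv']; rfl)
  rw [h0] at h1 h2 h4
  exact ⟨Φ', hs, h1, h0, h2, h3, h4⟩

abbrev R3 := ℝ × ℝ × ℝ

/-- the incidence relation `F` becomes `G` in the coordinates given by `H`, `K`;
`K` acts on the pairs `(b, a)` -/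
def Inc (F G : R3 → ℝ) (H K : ℝ × ℝ → ℝ × ℝ) : Prop :=
  ∀ᶠ q : R3 × ℝ in 𝓝 0,
    ((H (q.1.2.2, q.2)).2 = F ((K (q.1.2.1, q.1.1)).2, (K (q.1.2.1, q.1.1)).1, (H (q.1.2.2, q.2)).1)
      ↔ q.2 = G q.1)

/-- the induced map on the four coordinates -/
def quad (H K : ℝ × ℝ → ℝ × ℝ) (q : R3 × ℝ) : R3 × ℝ :=
  (((K (q.1.2.1, q.1.1)).2, (K (q.1.2.1, q.1.1)).1, (H (q.1.2.2, q.2)).1), (H (q.1.2.2, q.2)).2)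

theorem quad_sm {H K : ℝ × ℝ → ℝ × ℝ} (hH : SM H 0) (hK : SM K 0) : SM (quad H K) 0 := by
  have h1 : SM (fun q : R3 × ℝ => H (q.1.2.2, q.2)) 0 :=
    hH.comp' (SM.id.fst.snd.snd.prodMk SM.id.snd) rfl
  have h2 : SM (fun q : R3 × ℝ => K (q.1.2.1, q.1.1)) 0 :=
    hK.comp' (SM.id.fst.snd.fst.prodMk SM.id.fst.fst) rfl
  exact (h2.snd.prodMk (h2.fst.prodMk h1.fst)).prodMk h1.snd

theorem quad_zero {H K : ℝ × ℝ → ℝ × ℝ} (hH : H 0 = 0) (hK : K 0 = 0) : quad H K 0 = 0 := by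
  have e : ((0 : ℝ), (0 : ℝ)) = 0 := rfl
  simp [quad, e, hH, hK]

theorem Inc.trans {F G G' : R3 → ℝ} {H K H' K' : ℝ × ℝ → ℝ × ℝ} (h : Inc F G H K)
    (h' : Inc G G' H' K') (sH : SM H' 0) (zH : H' 0 = 0) (sK : SM K' 0) (zK : K' 0 = 0) :
    Inc F G' (fun p => H (H' p)) (fun p => K (K' p)) := by
  have h1 := ev_comp h (quad_sm sH sK).cont (quad_zero zH zK)
  filter_upwards [h1, h'] with q a b
  rw [← b]
  exact a

theorem Inc.symm {F G : R3 → ℝ} {H K Φ Ψ : ℝ × ℝ → ℝ × ℝ} (h : Inc F G H K)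
    (hH : LDP Φ H) (hK : LDP Ψ K) : Inc G F Φ Ψ := by
  have h1 := ev_comp h (quad_sm hH.sm hK.sm).cont (quad_zero hH.z hK.z)
  have c1 : ContinuousAt (fun q : R3 × ℝ => (q.1.2.2, q.2)) 0 := by fun_prop
  have c2 : ContinuousAt (fun q : R3 × ℝ => (q.1.2.1, q.1.1)) 0 := by fun_prop
  filter_upwards [h1, ev_comp hH.li c1 rfl, ev_comp hK.li c2 rfl] with q a b c
  simp only [quad, Prod.mk.eta, b, c] at a
  exact a.symm

theorem Inc.eq {F G : R3 → ℝ} {H K : ℝ × ℝ → ℝ × ℝ} (h : Inc F G H K) (sG : SM G 0)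
    (zG : G 0 = 0) : ∀ᶠ p : R3 in 𝓝 0, (H (p.2.2, G p)).2 =
      F ((K (p.2.1, p.1)).2, (K (p.2.1, p.1)).1, (H (p.2.2, G p)).1) := by
  have c : ContinuousAt (fun p : R3 => (p, G p)) 0 := (SM.id.prodMk sG).cont
  filter_upwards [ev_comp h c (by simp [zG])] with p hp
  exact hp.2 rfl

theorem push {F : R3 → ℝ} {H K : ℝ × ℝ → ℝ × ℝ} (sF : SM F 0) (zF : F 0 = 0) (d3 : D3 F 0 = 0)
    (sH : SM H 0) (zH : H 0 = 0) (sK : SM K 0) (zK : K 0 = 0)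
    (hd : E2 (fun p => (H p).2) 0 ≠ 0) :
    ∃ G : R3 → ℝ, SM G 0 ∧ G 0 = 0 ∧ Inc F G H K := by
  have hq := quad_sm sH sK
  have hz := quad_zero zH zK
  have se : SM (fun q : R3 × ℝ => (quad H K q).2 - F (quad H K q).1) 0 :=
    hq.snd.sub (sF.comp' hq.fst (by rw [hz]; rfl))
  obtain ⟨G, h1, h2, h3⟩ := implicit se (by simp [hz, zF]) (by
    have e1 : HasDerivAt (fun y : ℝ => (quad H K ((0 : R3), y)).2
        - F (quad H K ((0 : R3), y)).1) (fderiv ℝ (fun q : R3 × ℝ => (quad H K q).2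
          - F (quad H K q).1) 0 (0, 1)) 0 :=
      HasFDerivAt.comp_hasDerivAt (f := fun y : ℝ => ((0 : R3), y)) (0 : ℝ) se.diff.hasFDerivAt
        ((hasDerivAt_const (0 : ℝ) (0 : R3)).prodMk (hasDerivAt_id' (0 : ℝ)))
    have e2 : HasDerivAt (fun y : ℝ => (H (0, y)).2) (E2 (fun p => (H p).2) 0) 0 :=
      slice22 (F := fun p => (H p).2) sH.snd
    have e3 : HasDerivAt (fun y : ℝ => (H (0, y)).1) (E2 (fun p => (H p).1) 0) 0 :=
      slice22 (F := fun p => (H p).1) sH.fst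
    have z0 : ∀ {α β : Type} [Zero α] [Zero β], ((0 : α), (0 : β)) = 0 := rfl
    have e4 : HasDerivAt (fun y : ℝ => F ((K (0, 0)).2, (K (0, 0)).1, (H (0, y)).1)) _ 0 :=
      chain3 (by simpa [z0, zH, zK] using sF) (hasDerivAt_const (0 : ℝ) _)
        (hasDerivAt_const (0 : ℝ) _) e3
    have e5 := e1.unique (e2.sub e4)
    rw [e5]
    simp only [z0, zH, zK, Prod.fst_zero, Prod.snd_zero, mul_zero, d3, zero_mul, add_zero,
      sub_zero]
    exact hd)
  refine ⟨G, h1, h2, ?_⟩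
  filter_upwards [h3] with q hq
  rw [← hq, sub_eq_zero]
  rfl

/-- regular defining functions -/
structure Reg (F : R3 → ℝ) : Prop where
  sm : SM F 0
  z : F 0 = 0
  d1 : D1 F 0 = 1
  d2 : D2 F 0 = 0
  d3 : D3 F 0 = 0
  d23 : D2 (D3 F) 0 ≠ 0

/-- `y = F (a, b, x)` is the same as `a = F' (y, x, b)` -/
def Dual (F F' : R3 → ℝ) : Prop :=
  ∀ᶠ q : R3 × ℝ in 𝓝 0, (q.1.1 = F (q.2, q.1.2.2, q.1.2.1) ↔ q.2 = F' q.1)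

theorem Dual.right {F F' : R3 → ℝ} (h : Dual F F') (s : SM F' 0) (z : F' 0 = 0) :
    ∀ᶠ p : R3 in 𝓝 0, F (F' p, p.2.2, p.2.1) = p.1 := by
  have c : ContinuousAt (fun p : R3 => (p, F' p)) 0 := (SM.id.prodMk s).cont
  filter_upwards [ev_comp h c (by simp [z])] with p hp
  exact (hp.2 rfl).symm

theorem Dual.left {F F' : R3 → ℝ} (h : Dual F F') (s : SM F 0) (z : F 0 = 0) :
    ∀ᶠ p : R3 in 𝓝 0, F' (F p, p.2.2, p.2.1) = p.1 := by
  have c : ContinuousAt (fun p : R3 => (((F p, p.2.2, p.2.1), p.1) : R3 × ℝ)) 0 :=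
    ((s.prodMk (SM.id.snd.snd.prodMk SM.id.snd.fst)).prodMk SM.id.fst).cont
  filter_upwards [ev_comp h c (by simp [z])] with p hp
  exact (hp.1 rfl).symm

/-- derivatives of the dual function -/
theorem dual_derivs {F F' : R3 → ℝ} (sF : SM F 0) (h : Dual F F') (s : SM F' 0) (z : F' 0 = 0) :
    ∀ᶠ p : R3 in 𝓝 0,
      D1 F (F' p, p.2.2, p.2.1) * D1 F' p = 1 ∧
      D1 F (F' p, p.2.2, p.2.1) * D2 F' p + D3 F (F' p, p.2.2, p.2.1) = 0 ∧
      D1 F (F' p, p.2.2, p.2.1) * D3 F' p + D2 F (F' p, p.2.2, p.2.1) = 0 := by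
  have c : ContinuousAt (fun p : R3 => ((F' p, p.2.2, p.2.1) : R3)) 0 :=
    (s.prodMk (SM.id.snd.snd.prodMk SM.id.snd.fst)).cont
  filter_upwards [(h.right s z).eventually_nhds, s.ev,
    ev_comp sF.ev c (by simp [z])] with ⟨y, x, b⟩ h1 h2 h3
  simp only at h3 ⊢
  refine ⟨?_, ?_, ?_⟩
  · have a := chain3 h3 (slice1 h2) (hasDerivAt_const y b) (hasDerivAt_const y x)
    have b := (hasDerivAt_id' y).congr_of_eventuallyEq (ev1 h1)
    have := a.unique b
    linarith
  · have a := chain3 h3 (slice2 h2) (hasDerivAt_const x b) (hasDerivAt_id' x)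
    have b := (hasDerivAt_const x y).congr_of_eventuallyEq (ev2 h1)
    have := a.unique b
    linarith
  · have a := chain3 h3 (slice3 h2) (hasDerivAt_id' b) (hasDerivAt_const b x)
    have b := (hasDerivAt_const b y).congr_of_eventuallyEq (ev3 h1)
    have := a.unique b
    linarith

theorem dual_exists {F : R3 → ℝ} (hF : SM F 0) (zF : F 0 = 0) (h1 : D1 F 0 ≠ 0) :
    ∃ F', SM F' 0 ∧ F' 0 = 0 ∧ Dual F F' := by
  have sg : SM (fun q : R3 × ℝ => F (q.2, q.1.2.2, q.1.2.1)) 0 :=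
    hF.comp' (SM.id.snd.prodMk (SM.id.fst.snd.snd.prodMk SM.id.fst.snd.fst)) rfl
  have z0 : ∀ {α β : Type} [Zero α] [Zero β], ((0 : α), (0 : β)) = 0 := rfl
  have se : SM (fun q : R3 × ℝ => F (q.2, q.1.2.2, q.1.2.1) - q.1.1) 0 := sg.sub SM.id.fst.fst
  obtain ⟨G, a1, a2, a3⟩ := implicit se (by simp [z0, zF]) (by
    have e1 : HasDerivAt (fun y : ℝ => F (y, 0, 0) - 0) (fderiv ℝ (fun q : R3 × ℝ =>
         F (q.2, q.1.2.2, q.1.2.1) - q.1.1) 0 (0, 1)) 0 :=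
      HasFDerivAt.comp_hasDerivAt (f := fun y : ℝ => ((0 : R3), y)) (0 : ℝ) se.diff.hasFDerivAt
        ((hasDerivAt_const (0 : ℝ) (0 : R3)).prodMk (hasDerivAt_id' (0 : ℝ)))
    have e2 := (slice1 (F := F) (a := 0) (b := 0) (x := 0) hF).sub_const 0
    rw [e1.unique e2]
    exact h1)
  refine ⟨G, a1, a2, ?_⟩
  filter_upwards [a3] with q hq
  rw [← hq, sub_eq_zero, eq_comm]

theorem reg_dual {F : R3 → ℝ} (h : Reg F) : ∃ F', Reg F' ∧ Dual F F' := by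
  obtain ⟨F', s, z, hd⟩ := dual_exists h.sm h.z (by rw [h.d1]; simp)
  have dd := dual_derivs h.sm hd s z
  have z0 : ∀ {α β : Type} [Zero α] [Zero β], ((0 : α), (0 : β)) = 0 := rfl
  have d0 := dd.self_of_nhds
  simp only [z, Prod.fst_zero, Prod.snd_zero, z0, h.d1, h.d2, h.d3] at d0
  obtain ⟨e1, e2, e3⟩ := d0
  have e1' : D1 F' 0 = 1 := by linarith
  have e2' : D2 F' 0 = 0 := by linarith
  have e3' : D3 F' 0 = 0 := by linarith
  refine ⟨F', ⟨s, z, e1', e2', e3', ?_⟩, hd⟩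
  have hx := ev2 (a := 0) (b := 0) (x := 0) dd
  have k0 : F' 0 = 0 := z
  have a1 : HasDerivAt (fun t : ℝ => D1 F (F' (0, t, 0), 0, t)) _ 0 :=
    chain3 (by simpa [k0, z0] using h.sm.D1) (slice2 (F := F') (a := 0) (b := 0) (x := 0) s)
      (hasDerivAt_const (0 : ℝ) 0) (hasDerivAt_id' (0 : ℝ))
  have a2 : HasDerivAt (fun t : ℝ => D2 F (F' (0, t, 0), 0, t)) _ 0 :=
    chain3 (by simpa [k0, z0] using h.sm.D2) (slice2 (F := F') (a := 0) (b := 0) (x := 0) s)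
      (hasDerivAt_const (0 : ℝ) 0) (hasDerivAt_id' (0 : ℝ))
  have a3 := slice2 (F := D3 F') (a := 0) (b := 0) (x := 0) s.D3
  have a4 := (a1.mul a3).add a2
  have a5 := (hasDerivAt_const (0 : ℝ) (0 : ℝ)).congr_of_eventuallyEq
    (hx.mono fun t ht => ht.2.2)
  have a6 := a4.unique a5
  simp only [k0, z0, h.d1, e2', e3'] at a6
  have hc : D3 (D2 F) 0 ≠ 0 := by rw [← D23_comm h.sm]; exact h.d23
  intro hcon
  apply hc
  rw [hcon] at a6
  linarith

/-- the second order ODE satisfied by the curves -/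
theorem exists_Q {F : R3 → ℝ} (h : Reg F) :
    ∃ Q : R3 → ℝ, SM Q 0 ∧ ∀ᶠ p : R3 in 𝓝 0, D3 (D3 F) p = Q (p.2.2, F p, D3 F p) := by
  let f : R3 → R3 := fun p => (p.2.2, F p, D3 F p)
  have sf : SM f 0 := SM.id.snd.snd.prodMk (h.sm.prodMk h.sm.D3)
  have f0 : f 0 = 0 := by simp [f, h.z, h.d3]
  obtain ⟨g, g1, g2, g3, g4⟩ := ift sf (by
    rintro ⟨u, v, w⟩ hv
    have : HasFDerivAt f (((ContinuousLinearMap.snd ℝ ℝ ℝ).comp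
        (ContinuousLinearMap.snd ℝ ℝ (ℝ × ℝ))).prod
        ((fderiv ℝ F 0).prod (fderiv ℝ (D3 F) 0))) 0 :=
      (HasFDerivAt.comp (0 : R3) (hasFDerivAt_snd) hasFDerivAt_snd).prodMk
        (h.sm.diff.hasFDerivAt.prodMk h.sm.D3.diff.hasFDerivAt)
    rw [this.fderiv] at hv
    simp only [ContinuousLinearMap.prod_apply, fderiv3, ContinuousLinearMap.comp_apply,
      ContinuousLinearMap.coe_snd', Prod.mk_eq_zero, h.d1, h.d2, h.d3] at hv
    obtain ⟨e1, e2, e3⟩ := hv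
    subst e1
    have hu : u = 0 := by linarith
    subst hu
    have hv : v = 0 := by simpa [h.d23] using e3
    rw [hv]; rfl)
  rw [f0] at g1 g2
  refine ⟨fun q => D3 (D3 F) (g q), h.sm.D3.D3.comp' g1 g2, ?_⟩
  filter_upwards [g3] with p hp
  rw [show (p.2.2, F p, D3 F p) = f p from rfl, hp]

end PCR

namespace PCR

/-- the cubic Taylor form (in the velocity) of the second order ODE -/
noncomputable def Cub (Q : R3 → ℝ) (m : R3) (u v : ℝ) : ℝ :=
  Q m * u ^ 3 + D3 Q m * u ^ 2 * (v - m.2.2 * u) + D3 (D3 Q) m / 2 * u * (v - m.2.2 * u) ^ 2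
    + D3 (D3 (D3 Q)) m / 6 * (v - m.2.2 * u) ^ 3

theorem SM.Cub {E : Type*} [NormedAddCommGroup E] [NormedSpace ℝ E] {Q : R3 → ℝ} {m : E → R3}
    {u v : E → ℝ} {p : E} {m0 : R3} (hQ : SM Q m0) (hm : SM m p) (h0 : m p = m0) (hu : SM u p)
    (hv : SM v p) : SM (fun z => Cub Q (m z) (u z) (v z)) p := by
  have hw : SM (fun z => v z - (m z).2.2 * u z) p := hv.sub (hm.snd.snd.mul hu)
  exact ((((hQ.comp' hm h0).mul (hu.pow 3)).add (((hQ.D3.comp' hm h0).mul (hu.pow 2)).mul hw)).add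
    ((((hQ.D3.D3.comp' hm h0).div (SM.const 2) (by norm_num)).mul hu).mul (hw.pow 2))).add
    (((hQ.D3.D3.D3.comp' hm h0).div (SM.const 6) (by norm_num)).mul (hw.pow 3))

/-- the chain equation for one of the two projections of a curve -/
def Chain (Q F : R3 → ℝ) (x y b a : ℝ → ℝ) : Prop :=
  ∀ᶠ t in 𝓝 (0 : ℝ), deriv x t * deriv (deriv y) t - deriv y t * deriv (deriv x) t =
    Cub Q (x t, y t, D3 F (a t, b t, x t)) (deriv x t) (deriv y t)

theorem chain_exists {F F' Q Q' : R3 → ℝ} (hF : Reg F) (hF' : Reg F') (hQ : SM Q 0)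
    (hQ' : SM Q' 0) :
    ∃ b x : ℝ → ℝ, SM b 0 ∧ SM x 0 ∧ b 0 = 0 ∧ x 0 = 0 ∧ deriv b 0 = 0 ∧ deriv x 0 = 0 ∧
      Chain Q F x (fun t => F (t, b t, x t)) b (fun t => t) ∧
      Chain Q' F' b (fun t => t) x (fun t => F (t, b t, x t)) := by
  let E := ℝ × ℝ × ℝ × ℝ × ℝ
  let sa : SM (fun z : E => z.1) 0 := SM.id.fst
  let sb : SM (fun z : E => z.2.1) 0 := SM.id.snd.fst
  let sx : SM (fun z : E => z.2.2.1) 0 := SM.id.snd.snd.fst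
  let sp : SM (fun z : E => z.2.2.2.1) 0 := SM.id.snd.snd.snd.fst
  let sq : SM (fun z : E => z.2.2.2.2) 0 := SM.id.snd.snd.snd.snd
  let m : E → R3 := fun z => (z.1, z.2.1, z.2.2.1)
  have sm : SM m 0 := sa.prodMk (sb.prodMk sx)
  have m0 : m 0 = 0 := rfl
  have lift : ∀ {g : R3 → ℝ}, SM g 0 → SM (fun z => g (m z)) 0 := fun hg => hg.comp' sm m0
  let n' : E → R3 := fun z => (z.2.1, z.1, D3 F' (F (m z), z.2.2.1, z.2.1))
  have sn' : SM n' 0 := sb.prodMk (sa.prodMk (hF'.sm.D3.comp'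
    ((lift hF.sm).prodMk (sx.prodMk sb)) (by simp [m0, hF.z])))
  have n0' : n' 0 = 0 := by simp [n', m0, hF.z]; exact hF'.d3
  let n : E → R3 := fun z => (z.2.2.1, F (m z), D3 F (m z))
  have sn : SM n 0 := sx.prodMk ((lift hF.sm).prodMk (lift hF.sm.D3))
  have n0 : n 0 = 0 := by simp [n, m0, hF.z, hF.d3]
  let bdd : E → ℝ := fun z => - Cub Q' (n' z) z.2.2.2.1 1
  have sbdd : SM bdd 0 := (SM.Cub hQ' sn' n0' sp (SM.const 1)).neg
  let yd : E → ℝ := fun z => D1 F (m z) + D2 F (m z) * z.2.2.2.1 + D3 F (m z) * z.2.2.2.2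
  have syd : SM yd 0 := ((lift hF.sm.D1).add ((lift hF.sm.D2).mul sp)).add
    ((lift hF.sm.D3).mul sq)
  let tot : (R3 → ℝ) → E → ℝ := fun g z => D1 g (m z) * 1 + D2 g (m z) * z.2.2.2.1
    + D3 g (m z) * z.2.2.2.2
  have stot : ∀ {g : R3 → ℝ}, SM g 0 → SM (tot g) 0 := fun hg =>
    (((lift hg.D1).mul (SM.const 1)).add ((lift hg.D2).mul sp)).add ((lift hg.D3).mul sq)
  let den : E → ℝ := fun z => D1 F (m z) + D2 F (m z) * z.2.2.2.1
  have sden : SM den 0 := (lift hF.sm.D1).add ((lift hF.sm.D2).mul sp)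
  have den0 : den 0 ≠ 0 := by simp [den, m0, hF.d1]
  let rest : E → ℝ := fun z => tot (D1 F) z + tot (D2 F) z * z.2.2.2.1 + D2 F (m z) * bdd z
    + tot (D3 F) z * z.2.2.2.2
  have srest : SM rest 0 := (((stot hF.sm.D1).add ((stot hF.sm.D2).mul sp)).add
    ((lift hF.sm.D2).mul sbdd)).add ((stot hF.sm.D3).mul sq)
  let xdd : E → ℝ := fun z => (z.2.2.2.2 * rest z - Cub Q (n z) z.2.2.2.2 (yd z)) / den z
  have sxdd : SM xdd 0 := ((sq.mul srest).sub (SM.Cub hQ sn n0 sq syd)).div sden den0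
  obtain ⟨α, h1, h2, h3⟩ := ode (V := fun z : E => ((1, z.2.2.2.1, z.2.2.2.2, bdd z, xdd z) : E))
    ((SM.const 1).prodMk (sp.prodMk (sq.prodMk (sbdd.prodMk sxdd))))
  have d1 : ∀ᶠ t in 𝓝 (0 : ℝ), HasDerivAt (fun t => (α t).1) 1 t := h3.mono fun t h => h.fst
  have d2 : ∀ᶠ t in 𝓝 (0 : ℝ), HasDerivAt (fun t => (α t).2.1) (α t).2.2.2.1 t :=
    h3.mono fun t h => h.snd.fst
  have d3 : ∀ᶠ t in 𝓝 (0 : ℝ), HasDerivAt (fun t => (α t).2.2.1) (α t).2.2.2.2 t :=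
    h3.mono fun t h => h.snd.snd.fst
  have d4 : ∀ᶠ t in 𝓝 (0 : ℝ), HasDerivAt (fun t => (α t).2.2.2.1) (bdd (α t)) t :=
    h3.mono fun t h => h.snd.snd.snd.fst
  have d5 : ∀ᶠ t in 𝓝 (0 : ℝ), HasDerivAt (fun t => (α t).2.2.2.2) (xdd (α t)) t :=
    h3.mono fun t h => h.snd.snd.snd.snd
  have ha : ∀ᶠ t in 𝓝 (0 : ℝ), (α t).1 = t := by
    obtain ⟨ε, hε, hb⟩ := Metric.eventually_nhds_iff_ball.1 d1
    refine Metric.eventually_nhds_iff_ball.2 ⟨ε, hε, fun t ht => ?_⟩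
    have h0 : (α 0).1 - 0 = 0 := by rw [h2]; simp
    have := (convex_ball (0 : ℝ) ε).is_const_of_fderivWithin_eq_zero (𝕜 := ℝ)
      (f := fun t => (α t).1 - t)
      (fun s hs => ((hb s hs).sub (hasDerivAt_id' s)).differentiableAt.differentiableWithinAt)
      (fun s hs => by
        have e := ((hb s hs).sub (hasDerivAt_id' s)).hasFDerivAt
        have e' := (e.hasFDerivWithinAt (s := Metric.ball 0 ε)).fderivWithin
          (Metric.isOpen_ball.uniqueDiffWithinAt hs)
        refine Eq.trans e' ?_
        ext; simp) ht (Metric.mem_ball_self hε)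
    simp only [h0] at this
    linarith
  -- the first derivative of `y`
  have evα : ∀ {P : E → Prop}, (∀ᶠ z in 𝓝 0, P z) → ∀ᶠ t in 𝓝 (0 : ℝ), P (α t) :=
    fun h => ev_comp h h1.cont h2
  have dg : ∀ {g : R3 → ℝ}, SM g 0 → ∀ᶠ t in 𝓝 (0 : ℝ),
      HasDerivAt (fun t => g (m (α t))) (tot g (α t)) t := by
    intro g hg
    filter_upwards [d1, d2, d3, evα (ev_comp hg.ev sm.cont m0)] with t e1 e2 e3 e4
    exact chain3 (f := g) e4 e1 e2 e3
  have eqy : (fun t => F (t, (α t).2.1, (α t).2.2.1)) =ᶠ[𝓝 0] fun t => F (m (α t)) := by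
    filter_upwards [ha] with t ht
    simp only [m, ht]
  have ytot : ∀ z, tot F z = yd z := fun z => by simp only [tot, yd]; ring
  have eqyd : deriv (fun t => F (t, (α t).2.1, (α t).2.2.1)) =ᶠ[𝓝 0] fun t => yd (α t) := by
    filter_upwards [eqy.eventuallyEq_nhds, dg hF.sm] with t e1 e2
    rw [e1.deriv_eq, e2.deriv, ytot]
  have eqxd : deriv (fun t => (α t).2.2.1) =ᶠ[𝓝 0] fun t => (α t).2.2.2.2 := by
    filter_upwards [d3] with t e using e.deriv
  have eqbd : deriv (fun t => (α t).2.1) =ᶠ[𝓝 0] fun t => (α t).2.2.2.1 := by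
    filter_upwards [d2] with t e using e.deriv
  refine ⟨fun t => (α t).2.1, fun t => (α t).2.2.1, h1.snd.fst, h1.snd.snd.fst, by simp [h2],
    by simp [h2], ?_, ?_, ?_, ?_⟩
  · rw [eqbd.self_of_nhds]; simp [h2]
  · rw [eqxd.self_of_nhds]; simp [h2]
  · filter_upwards [ha, eqy, eqyd, eqxd, eqyd.eventuallyEq_nhds, eqxd.eventuallyEq_nhds, d4, d5,
      dg hF.sm.D1, dg hF.sm.D2, dg hF.sm.D3, evα (sden.cont.eventually_ne den0)]
      with t a0 a1 a2 a3 a4 a5 a6 a7 a8 a9 a10 a11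
    rw [a2, a3, a4.deriv_eq, a5.deriv_eq, a7.deriv]
    have e := (a8.add (a9.mul a6)).add (a10.mul a7)
    have e' := e.deriv
    have em : ((t, (α t).2.1, (α t).2.2.1) : R3) = m (α t) := by simp only [m, a0]
    rw [show deriv (fun t => yd (α t)) t = _ from e', em]
    have hx : xdd (α t) * den (α t) = (α t).2.2.2.2 * rest (α t)
      - Cub Q (n (α t)) (α t).2.2.2.2 (yd (α t)) := div_mul_cancel₀ _ a11
    have en : (((α t).2.2.1, F (m (α t)), D3 F (m (α t))) : R3) = n (α t) := rfl
    rw [en]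
    have hr : rest (α t) = _ := rfl
    have hd : den (α t) = D1 F (m (α t)) + D2 F (m (α t)) * (α t).2.2.2.1 := rfl
    have hy : yd (α t) = den (α t) + D3 F (m (α t)) * (α t).2.2.2.2 := rfl
    have hr : rest (α t) = tot (D1 F) (α t) + tot (D2 F) (α t) * (α t).2.2.2.1
      + D2 F (m (α t)) * bdd (α t) + tot (D3 F) (α t) * (α t).2.2.2.2 := rfl
    rw [hr] at hx
    linear_combination (-1 : ℝ) * hx - xdd (α t) * hy
  · filter_upwards [ha, eqy, eqbd, eqbd.eventuallyEq_nhds, d4] with t a0 a1 a2 a3 a4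
    rw [a2, a3.deriv_eq, a4.deriv]
    have e1 : deriv (fun t : ℝ => t) = fun _ => 1 := by ext; simp
    rw [e1, a1]
    have en : (((α t).2.1, t, D3 F' (F (m (α t)), (α t).2.2.1, (α t).2.1)) : R3) = n' (α t) := by
      simp only [n', a0]
    rw [en]
    simp [bdd]

end PCR

namespace PCR

theorem s1a {F F' : R3 → ℝ} (hF : Reg F) (hF' : Reg F') (hd : Dual F F') {b x : ℝ → ℝ}
    (sb : SM b 0) (sx : SM x 0) (b0 : b 0 = 0) (x0 : x 0 = 0) (db0 : deriv b 0 = 0)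
    (dx0 : deriv x 0 = 0) :
    ∃ G H K Hi Ki, SM G 0 ∧ G 0 = 0 ∧ Inc F G H K ∧ LDP H Hi ∧ LDP K Ki ∧
      (∀ᶠ p : R3 in 𝓝 0, G (p.1, 0, p.2.2) = p.1) ∧ (∀ᶠ p : R3 in 𝓝 0, G (p.1, p.2.1, 0) = p.1) ∧
      D2 (D3 G) 0 ≠ 0 ∧ (∀ᶠ t in 𝓝 (0 : ℝ), H (0, t) = (x t, F (t, b t, x t))) ∧
      (∀ᶠ t in 𝓝 (0 : ℝ), K (0, t) = (b t, t)) := by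
  let y : ℝ → ℝ := fun t => F (t, b t, x t)
  have sy : SM y 0 := hF.sm.comp' (SM.id.prodMk (sb.prodMk sx)) (by simp [b0, x0])
  have y0 : y 0 = 0 := by simp only [y, b0, x0]; exact hF.z
  have s1 : SM (fun p : ℝ × ℝ => p.1) 0 := SM.id.fst
  have s2 : SM (fun p : ℝ × ℝ => p.2) 0 := SM.id.snd
  have sx2 : SM (fun p : ℝ × ℝ => x p.2) 0 := sx.comp' s2 rfl
  have sb2 : SM (fun p : ℝ × ℝ => b p.2) 0 := sb.comp' s2 rfl
  have sy2 : SM (fun p : ℝ × ℝ => y p.2) 0 := sy.comp' s2 rfl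
  let H1 : ℝ × ℝ → ℝ := fun p => x p.2 + p.1
  let H2 : ℝ × ℝ → ℝ := fun p => F (p.2, b p.2, x p.2 + p.1)
  let K1 : ℝ × ℝ → ℝ := fun p => b p.2 + p.1
  let K2 : ℝ × ℝ → ℝ := fun p => F' (y p.2, x p.2, b p.2 + p.1)
  have sH1 : SM H1 0 := sx2.add s1
  have sK1 : SM K1 0 := sb2.add s1
  have sH2 : SM H2 0 := hF.sm.comp' (s2.prodMk (sb2.prodMk sH1)) (by simp [b0, x0])
  have sK2 : SM K2 0 := hF'.sm.comp' (sy2.prodMk (sx2.prodMk sK1)) (by simp [b0, x0, y0])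
  have H10 : H1 0 = 0 := by simp [H1, x0]
  have H20 : H2 0 = 0 := by simp [H2, x0, b0]; exact hF.z
  have K10 : K1 0 = 0 := by simp [K1, b0]
  have K20 : K2 0 = 0 := by simp [K2, x0, b0, y0]; exact hF'.z
  have KA : ∀ᶠ t in 𝓝 (0 : ℝ), K2 (0, t) = t := by
    have c : ContinuousAt (fun t : ℝ => ((t, b t, x t) : R3)) 0 :=
      (SM.id.prodMk (sb.prodMk sx)).cont
    filter_upwards [ev_comp (hd.left hF.sm hF.z) c (by simp [b0, x0])] with t ht
    simpa [K2, y] using ht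
  have e11 : E1 H1 0 = 1 := (slice21 (F := H1) (a := 0) (b := 0) sH1).unique
    (by simpa [H1] using (hasDerivAt_id' (0 : ℝ)).const_add (x 0))
  have e12 : E2 H1 0 = 0 := (slice22 (F := H1) (a := 0) (b := 0) sH1).unique
    (by simpa [H1, dx0] using sx.diff.hasDerivAt)
  have hdb := sb.diff.hasDerivAt
  have hdx := sx.diff.hasDerivAt
  rw [db0] at hdb
  rw [dx0] at hdx
  have hF0 : SM F (0, b 0, x 0) := by rw [b0, x0]; exact hF.sm
  have hdy := chain3 hF0 (hasDerivAt_id' (0 : ℝ)) hdb hdx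
  have hdy' : HasDerivAt y 1 0 := by
    convert hdy using 1
    rw [b0, x0]
    have : D1 F (0, 0, 0) = 1 := hF.d1
    simp [this]
  have e22 : E2 H2 0 = 1 := (slice22 (F := H2) (a := 0) (b := 0) sH2).unique
    (by simpa [H2] using hdy')
  have f11 : E1 K1 0 = 1 := (slice21 (F := K1) (a := 0) (b := 0) sK1).unique
    (by simpa [K1] using (hasDerivAt_id' (0 : ℝ)).const_add (b 0))
  have f12 : E2 K1 0 = 0 := (slice22 (F := K1) (a := 0) (b := 0) sK1).unique
    (by simpa [K1, dx0] using hdb)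
  have f22 : E2 K2 0 = 1 := (slice22 (F := K2) (a := 0) (b := 0) sK2).unique
    ((hasDerivAt_id' (0 : ℝ)).congr_of_eventuallyEq KA)
  have f21 : E1 K2 0 = 0 := by
    have h3 : SM F' ((fun _ : ℝ => y 0) 0, (fun _ : ℝ => x 0) 0, (fun s : ℝ => b 0 + s) 0) := by
      simp only [b0, x0, y0, add_zero]; exact hF'.sm
    have h4 := chain3 (c1 := fun _ => y 0) (c2 := fun _ => x 0) (c3 := fun s => b 0 + s) (t := 0) h3
      (hasDerivAt_const _ _) (hasDerivAt_const _ _)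
      ((hasDerivAt_id' (0 : ℝ)).const_add (b 0))
    have h5 := (slice21 (F := K2) (a := 0) (b := 0) sK2).unique h4
    refine h5.trans ?_
    have : D3 F' (0, 0, 0) = 0 := hF'.d3
    simp only [b0, x0, y0, add_zero, this]
    simp
  obtain ⟨Hi, hHi⟩ := LDP.mk' sH1 sH2 H10 H20 (by rw [e11, e12, e22]; norm_num)
  obtain ⟨Ki, hKi⟩ := LDP.mk' sK1 sK2 K10 K20 (by rw [f11, f12, f22]; norm_num)
  obtain ⟨G, sG, zG, hI⟩ := push (F := F) (H := fun p => (H1 p, H2 p)) (K := fun p => (K1 p, K2 p))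
    hF.sm hF.z hF.d3 hHi.sm hHi.z hKi.sm hKi.z (by simp only [e22]; norm_num)
  have c1 : ContinuousAt (fun p : R3 => (((p.1, 0, p.2.2), p.1) : R3 × ℝ)) 0 := by fun_prop
  have c2 : ContinuousAt (fun p : R3 => (((p.1, p.2.1, 0), p.1) : R3 × ℝ)) 0 := by fun_prop
  have G1 : ∀ᶠ p : R3 in 𝓝 0, G (p.1, 0, p.2.2) = p.1 := by
    filter_upwards [ev_comp hI c1 rfl, ev_comp KA continuousAt_fst rfl] with p h1 h2
    refine (h1.1 ?_).symm
    simp only [h2]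
    simp only [H2, H1, K1, add_zero]
  have G2 : ∀ᶠ p : R3 in 𝓝 0, G (p.1, p.2.1, 0) = p.1 := by
    have sa : SM (fun p : R3 => p.1) 0 := SM.id.fst
    have c3 : ContinuousAt (fun p : R3 => ((y p.1, x p.1, b p.1 + p.2.1) : R3)) 0 :=
      ((sy.comp' sa rfl).prodMk ((sx.comp' sa rfl).prodMk
        ((sb.comp' sa rfl).add SM.id.snd.fst))).cont
    filter_upwards [ev_comp hI c2 rfl, ev_comp (hd.right hF'.sm hF'.z) c3 (by simp [y0, x0, b0])]
      with p h1 h2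
    refine (h1.1 ?_).symm
    simp only [H2, H1, K1, K2, add_zero]
    exact h2.symm
  refine ⟨G, fun p => (H1 p, H2 p), fun p => (K1 p, K2 p), Hi, Ki, sG, zG, hI, hHi, hKi, G1, G2,
    ?_, ?_, ?_⟩
  · have hE := hI.eq sG zG
    have c4 : ContinuousAt (fun X : ℝ => ((0, 0, X) : R3)) 0 := by fun_prop
    have c5 : ContinuousAt (fun X : ℝ => ((X, 0) : ℝ × ℝ)) 0 := by fun_prop
    have key : ∀ᶠ X in 𝓝 (0 : ℝ), (E2 H2 (X, 0) - D3 F (0, 0, X) * E2 H1 (X, 0)) * D2 G (0, 0, X)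
        = D2 F (0, 0, X) := by
      filter_upwards [ev_comp G1 c4 rfl, ev_comp hE.eventually_nhds c4 rfl, ev_comp sG.ev c4 rfl,
        ev_comp sH1.ev c5 rfl, ev_comp sH2.ev c5 rfl, ev_comp hF.sm.ev c4 rfl] with X h1 h2 h3 h4 h5 h6
      have h7 := ev2 h2
      simp only at h7
      have k1 := slice2 h3
      have l1 := chain2 (f := H2) (c1 := fun _ => X) (c2 := fun s => G (0, s, X)) (t := 0)
        (by simpa only [h1] using h5) (hasDerivAt_const _ _) k1
      have l2 := chain2 (f := H1) (c1 := fun _ => X) (c2 := fun s => G (0, s, X)) (t := 0)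
        (by simpa only [h1] using h4) (hasDerivAt_const _ _) k1
      have l3 := slice21 (F := K1) (a := 0) (b := 0) sK1
      have l4 := slice21 (F := K2) (a := 0) (b := 0) sK2
      have K10' : K1 (0, 0) = 0 := K10
      have K20' : K2 (0, 0) = 0 := K20
      have hX : H1 (X, 0) = X := by simp [H1, x0]
      have l5 := chain3 (f := F) (by simpa only [h1, K10', K20', hX] using h6) l4 l3 l2
      have l6 := l1.unique (l5.congr_of_eventuallyEq h7)
      have f11' : E1 K1 (0, 0) = 1 := f11
      have f21' : E1 K2 (0, 0) = 0 := f21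
      simp only [h1, K10', K20', hX, f11', f21'] at l6
      linear_combination l6
    have z3 : ((0, 0, 0) : R3) = 0 := rfl
    have z2 : ((0, 0) : ℝ × ℝ) = 0 := rfl
    have m1 := slice21 (F := E2 H2) (a := 0) (b := 0) sH2.E2
    have m2 := slice21 (F := E2 H1) (a := 0) (b := 0) sH1.E2
    have m3 := slice3 (F := D3 F) (a := 0) (b := 0) (x := 0) hF.sm.D3
    have m4 := slice3 (F := D2 G) (a := 0) (b := 0) (x := 0) sG.D2
    have m5 := slice3 (F := D2 F) (a := 0) (b := 0) (x := 0) hF.sm.D2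
    have m6 := ((m1.sub (m3.mul m2)).mul m4).unique (m5.congr_of_eventuallyEq key)
    have k0 := key.self_of_nhds
    simp only [z3] at k0
    simp only [z2, e22, e12, hF.d2] at k0
    have g0 : D2 G 0 = 0 := by linarith
    simp only [Pi.sub_apply, Pi.mul_apply, z3] at m6
    simp only [z2, e22, e12, g0] at m6
    rw [D23_comm sG]
    have := hF.d23
    rw [D23_comm hF.sm] at this
    intro hcon
    rw [hcon] at m6
    apply this
    linarith
  · exact Eventually.of_forall fun t => by simp [H1, H2]
  · filter_upwards [KA] with t ht
    rw [ht]; simp [K1]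

end PCR

namespace PCR

theorem flat3 {F : R3 → ℝ} (s : SM F 0) (h : ∀ᶠ p : R3 in 𝓝 0, F (p.1, 0, p.2.2) = p.1) :
    ∀ᶠ p : R3 in 𝓝 0, D3 F (p.1, 0, p.2.2) = 0 := by
  have c : ContinuousAt (fun p : R3 => ((p.1, 0, p.2.2) : R3)) 0 := by fun_prop
  filter_upwards [h.eventually_nhds, ev_comp s.ev c rfl] with p h1 h2
  exact (slice3 h2).unique ((hasDerivAt_const _ _).congr_of_eventuallyEq (ev3 h1))

theorem flat2 {F : R3 → ℝ} (s : SM F 0) (h : ∀ᶠ p : R3 in 𝓝 0, F (p.1, p.2.1, 0) = p.1) :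
    ∀ᶠ p : R3 in 𝓝 0, D2 F (p.1, p.2.1, 0) = 0 := by
  have c : ContinuousAt (fun p : R3 => ((p.1, p.2.1, 0) : R3)) 0 := by fun_prop
  filter_upwards [h.eventually_nhds, ev_comp s.ev c rfl] with p h1 h2
  exact (slice2 h2).unique ((hasDerivAt_const _ _).congr_of_eventuallyEq (ev2 h1))

/-- first part of the normal form: conditions (i) and (ii) -/
structure N2 (G : R3 → ℝ) : Prop where
  sm : SM G 0
  z : G 0 = 0
  i1 : ∀ᶠ p : R3 in 𝓝 0, G (p.1, 0, p.2.2) = p.1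
  i2 : ∀ᶠ p : R3 in 𝓝 0, G (p.1, p.2.1, 0) = p.1
  ii1 : ∀ᶠ p : R3 in 𝓝 0, D3 G (p.1, p.2.1, 0) = p.2.1
  ii2 : ∀ᶠ p : R3 in 𝓝 0, D2 G (p.1, 0, p.2.2) = p.2.2

theorem s1b {F : R3 → ℝ} (sF : SM F 0) (zF : F 0 = 0)
    (F1 : ∀ᶠ p : R3 in 𝓝 0, F (p.1, 0, p.2.2) = p.1)
    (F2 : ∀ᶠ p : R3 in 𝓝 0, F (p.1, p.2.1, 0) = p.1) (nd : D2 (D3 F) 0 ≠ 0) :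
    ∃ G H K Hi Ki, N2 G ∧ Inc F G H K ∧ LDP H Hi ∧ LDP K Ki ∧
      (∀ᶠ t in 𝓝 (0 : ℝ), H (0, t) = (0, t)) ∧ (∀ᶠ t in 𝓝 (0 : ℝ), K (0, t) = (0, t)) := by
  have D3F := flat3 sF F1
  have D2F := flat2 sF F2
  have s1 : SM (fun p : ℝ × ℝ => p.1) 0 := SM.id.fst
  have s2 : SM (fun p : ℝ × ℝ => p.2) 0 := SM.id.snd
  let ξ : ℝ × ℝ → ℝ := fun p => D2 F (p.2, 0, p.1)
  let κ : ℝ → ℝ := fun a => D2 (D3 F) (a, 0, 0)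
  let β : ℝ × ℝ → ℝ := fun p => D3 F (p.2, p.1, 0) / κ p.2
  have sξ : SM ξ 0 := sF.D2.comp' (s2.prodMk ((SM.const 0).prodMk s1)) rfl
  have sκ : SM κ 0 := sF.D3.D2.comp' (SM.id.prodMk (SM.const 0)) rfl
  have sβ : SM β 0 := (sF.D3.comp' (s2.prodMk (s1.prodMk (SM.const 0))) rfl).div
    (sκ.comp' s2 rfl) nd
  have ξ0 : ξ 0 = 0 := D2F.self_of_nhds
  have d30 : D3 F 0 = 0 := D3F.self_of_nhds
  have β0 : β 0 = 0 := by
    have : D3 F (0, 0, 0) = 0 := d30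
    simp [β, this]
  have sndE1 : E1 (fun p : ℝ × ℝ => p.2) 0 = 0 :=
    (slice21 (F := fun p : ℝ × ℝ => p.2) (a := 0) (b := 0) s2).unique (hasDerivAt_const _ _)
  have sndE2 : E2 (fun p : ℝ × ℝ => p.2) 0 = 1 :=
    (slice22 (F := fun p : ℝ × ℝ => p.2) (a := 0) (b := 0) s2).unique (hasDerivAt_id' _)
  have ξ1 : ∀ᶠ A in 𝓝 (0 : ℝ), E1 ξ (0, A) = κ A := by
    have cA : ContinuousAt (fun A : ℝ => ((A, 0, 0) : R3)) 0 := by fun_prop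
    have cA2 : ContinuousAt (fun A : ℝ => ((0, A) : ℝ × ℝ)) 0 := by fun_prop
    filter_upwards [ev_comp sF.ev cA rfl, ev_comp sξ.ev cA2 rfl] with A h1 h2
    have := (slice21 h2).unique (slice3 h1.D2)
    rw [this, ← D23_comm h1]
  have κ0 : ∀ᶠ A in 𝓝 (0 : ℝ), κ A ≠ 0 := sκ.cont.eventually_ne nd
  have β1 : ∀ᶠ A in 𝓝 (0 : ℝ), E1 β (0, A) = 1 := by
    have cA : ContinuousAt (fun A : ℝ => ((A, 0, 0) : R3)) 0 := by fun_prop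
    have cA2 : ContinuousAt (fun A : ℝ => ((0, A) : ℝ × ℝ)) 0 := by fun_prop
    filter_upwards [ev_comp sF.ev cA rfl, ev_comp sβ.ev cA2 rfl, κ0] with A h1 h2 h3
    have := (slice21 h2).unique ((slice2 h1.D3).div_const (κ A))
    rw [this]
    exact div_self h3
  obtain ⟨H, hH⟩ := LDP.mk' sξ s2 ξ0 rfl (by
    rw [sndE1, sndE2, show E1 ξ 0 = κ 0 from ξ1.self_of_nhds]
    simpa using κ0.self_of_nhds)
  obtain ⟨K, hK⟩ := LDP.mk' sβ s2 β0 rfl (by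
    rw [sndE1, sndE2, show E1 β 0 = 1 from β1.self_of_nhds]
    norm_num)
  have cA3 : ContinuousAt (fun A : ℝ => ((A, 0, 0) : R3)) 0 := by fun_prop
  have cA2 : ContinuousAt (fun A : ℝ => ((0, A) : ℝ × ℝ)) 0 := by fun_prop
  have ξA : ∀ᶠ A in 𝓝 (0 : ℝ), ξ (0, A) = 0 := by
    filter_upwards [ev_comp D2F cA3 rfl] with A h using h
  have βA : ∀ᶠ A in 𝓝 (0 : ℝ), β (0, A) = 0 := by
    filter_upwards [ev_comp D3F cA3 rfl] with A h
    simp [β, h]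
  have Ht : ∀ᶠ t in 𝓝 (0 : ℝ), H (0, t) = (0, t) := by
    filter_upwards [ev_comp hH.li cA2 rfl, ξA] with t h1 h2
    simpa [h2] using h1
  have Kt : ∀ᶠ t in 𝓝 (0 : ℝ), K (0, t) = (0, t) := by
    filter_upwards [ev_comp hK.li cA2 rfl, βA] with t h1 h2
    simpa [h2] using h1
  have H2 : ∀ᶠ p in 𝓝 (0 : ℝ × ℝ), (H p).2 = p.2 := hH.ri.mono fun p h => (Prod.ext_iff.1 h).2
  have K2 : ∀ᶠ p in 𝓝 (0 : ℝ × ℝ), (K p).2 = p.2 := hK.ri.mono fun p h => (Prod.ext_iff.1 h).2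
  have H1 : ∀ᶠ p in 𝓝 (0 : ℝ × ℝ), ξ (H p) = p.1 := hH.ri.mono fun p h => congrArg Prod.fst h
  have K1 : ∀ᶠ p in 𝓝 (0 : ℝ × ℝ), β (K p) = p.1 := hK.ri.mono fun p h => congrArg Prod.fst h
  obtain ⟨G, sG, zG, hI⟩ := push (F := F) sF zF d30 hH.sm' hH.z' hK.sm' hK.z' (by
    have := (slice22 (F := fun p => (H p).2) (a := 0) (b := 0) hH.sm'.snd).unique
      ((hasDerivAt_id' (0 : ℝ)).congr_of_eventuallyEq (ev_comp H2 cA2 rfl))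
    rw [show E2 (fun p => (H p).2) 0 = 1 from this]
    norm_num)
  let h : ℝ × ℝ → ℝ := fun p => (H p).1
  let k : ℝ × ℝ → ℝ := fun p => (K p).1
  have sh : SM h 0 := hH.sm'.fst
  have sk : SM k 0 := hK.sm'.fst
  have h0 : h 0 = 0 := by simp [h, hH.z']
  have k0 : k 0 = 0 := by simp [k, hK.z']
  have hA : ∀ᶠ A in 𝓝 (0 : ℝ), h (0, A) = 0 := Ht.mono fun t ht => by simp [h, ht]
  have kA : ∀ᶠ A in 𝓝 (0 : ℝ), k (0, A) = 0 := Kt.mono fun t ht => by simp [k, ht]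
  -- simplified incidence relation
  have hI' : ∀ᶠ q : R3 × ℝ in 𝓝 0,
      (q.2 = F (q.1.1, k (q.1.2.1, q.1.1), h (q.1.2.2, q.2)) ↔ q.2 = G q.1) := by
    have c1 : ContinuousAt (fun q : R3 × ℝ => (q.1.2.2, q.2)) 0 := by fun_prop
    have c2 : ContinuousAt (fun q : R3 × ℝ => (q.1.2.1, q.1.1)) 0 := by fun_prop
    filter_upwards [hI, ev_comp H2 c1 rfl, ev_comp K2 c2 rfl] with q a1 a2 a3
    rw [← a1, a2, a3]
  have hE : ∀ᶠ p : R3 in 𝓝 0, G p = F (p.1, k (p.2.1, p.1), h (p.2.2, G p)) := by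
    have c : ContinuousAt (fun p : R3 => (p, G p)) 0 := (SM.id.prodMk sG).cont
    filter_upwards [ev_comp hI' c (by simp [zG])] with p hp
    exact hp.2 rfl
  have cf : ContinuousAt (fun p : R3 => p.1) 0 := by fun_prop
  have c10 : ContinuousAt (fun p : R3 => (((p.1, 0, p.2.2), p.1) : R3 × ℝ)) 0 := by fun_prop
  have c20 : ContinuousAt (fun p : R3 => (((p.1, p.2.1, 0), p.1) : R3 × ℝ)) 0 := by fun_prop
  have ch : SM (fun p : R3 => h (p.2.2, p.1)) 0 := sh.comp' (SM.id.snd.snd.prodMk SM.id.fst) rfl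
  have ck : SM (fun p : R3 => k (p.2.1, p.1)) 0 := sk.comp' (SM.id.snd.fst.prodMk SM.id.fst) rfl
  have zh : h ((0 : R3).2.2, (0 : R3).1) = 0 := h0
  have zk : k ((0 : R3).2.1, (0 : R3).1) = 0 := k0
  have c1 : ContinuousAt (fun p : R3 => ((p.1, 0, h (p.2.2, p.1)) : R3)) 0 :=
    (SM.id.fst.prodMk ((SM.const 0).prodMk ch)).cont
  have c2 : ContinuousAt (fun p : R3 => ((p.1, k (p.2.1, p.1), 0) : R3)) 0 :=
    (SM.id.fst.prodMk (ck.prodMk (SM.const 0))).cont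
  have z1 : (((0 : R3).1, 0, h ((0 : R3).2.2, (0 : R3).1)) : R3) = 0 := by rw [zh]; rfl
  have z2 : (((0 : R3).1, k ((0 : R3).2.1, (0 : R3).1), 0) : R3) = 0 := by rw [zk]; rfl
  have G1 : ∀ᶠ p : R3 in 𝓝 0, G (p.1, 0, p.2.2) = p.1 := by
    filter_upwards [ev_comp hI' c10 rfl, ev_comp kA cf rfl, ev_comp F1 c1 z1] with p a1 a2 a3
    refine (a1.1 ?_).symm
    simp only [a2]
    exact a3.symm
  have G2 : ∀ᶠ p : R3 in 𝓝 0, G (p.1, p.2.1, 0) = p.1 := by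
    filter_upwards [ev_comp hI' c20 rfl, ev_comp hA cf rfl, ev_comp F2 c2 z2] with p a1 a2 a3
    refine (a1.1 ?_).symm
    simp only [a2]
    exact a3.symm
  have h1 : ∀ᶠ A in 𝓝 (0 : ℝ), E1 h (0, A) * κ A = 1 := by
    filter_upwards [ev_comp hH.li.eventually_nhds cA2 rfl, ev_comp sh.ev cA2 rfl, ξ1, ξA,
      ev_comp sξ.ev cA2 rfl] with A a1 a2 a3 a4 a5
    have e1 := chain2 (f := h) (c1 := fun s => ξ (s, A)) (c2 := fun _ => A) (t := 0)
      (by simpa only [a4] using a2) (slice21 a5) (hasDerivAt_const _ _)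
    have c : ContinuousAt (fun s : ℝ => ((s, A) : ℝ × ℝ)) 0 := by fun_prop
    have e2 : ∀ᶠ s in 𝓝 (0 : ℝ), h (ξ (s, A), A) = s := by
      filter_upwards [ev_comp a1 c rfl] with s hs using congrArg Prod.fst hs
    have e3 := e1.unique ((hasDerivAt_id' (0 : ℝ)).congr_of_eventuallyEq e2)
    simp only [a3, a4] at e3
    linarith
  have h2 : ∀ᶠ A in 𝓝 (0 : ℝ), E2 h (0, A) = 0 := by
    filter_upwards [hA.eventually_nhds, ev_comp sh.ev cA2 rfl] with A a1 a2
    exact (slice22 a2).unique ((hasDerivAt_const _ _).congr_of_eventuallyEq a1)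
  have k1 : ∀ᶠ A in 𝓝 (0 : ℝ), E1 k (0, A) = 1 := by
    filter_upwards [ev_comp hK.li.eventually_nhds cA2 rfl, ev_comp sk.ev cA2 rfl, β1, βA,
      ev_comp sβ.ev cA2 rfl] with A a1 a2 a3 a4 a5
    have e1 := chain2 (f := k) (c1 := fun s => β (s, A)) (c2 := fun _ => A) (t := 0)
      (by simpa only [a4] using a2) (slice21 a5) (hasDerivAt_const _ _)
    have c : ContinuousAt (fun s : ℝ => ((s, A) : ℝ × ℝ)) 0 := by fun_prop
    have e2 : ∀ᶠ s in 𝓝 (0 : ℝ), k (β (s, A), A) = s := by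
      filter_upwards [ev_comp a1 c rfl] with s hs using congrArg Prod.fst hs
    have e3 := e1.unique ((hasDerivAt_id' (0 : ℝ)).congr_of_eventuallyEq e2)
    simp only [a3, a4] at e3
    linarith
  have p1 : ContinuousAt (fun p : R3 => ((p.1, 0, p.2.2) : R3)) 0 := by fun_prop
  have p2 : ContinuousAt (fun p : R3 => ((p.1, p.2.1, 0) : R3)) 0 := by fun_prop
  have q1 : ContinuousAt (fun p : R3 => ((p.2.2, p.1) : ℝ × ℝ)) 0 := by fun_prop
  have q2 : ContinuousAt (fun p : R3 => ((p.2.1, p.1) : ℝ × ℝ)) 0 := by fun_prop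
  have q0 : ContinuousAt (fun p : R3 => ((0, p.1) : ℝ × ℝ)) 0 := by fun_prop
  refine ⟨G, H, K, _, _, ⟨sG, zG, G1, G2, ?_, ?_⟩, hI, hH.symm, hK.symm, Ht, Kt⟩
  · filter_upwards [ev_comp hE.eventually_nhds p2 rfl, ev_comp sG.ev p2 rfl, G2,
      ev_comp hA cf rfl, ev_comp h1 cf rfl, ev_comp h2 cf rfl, ev_comp K1 q2 rfl,
      ev_comp K2 q2 rfl, ev_comp κ0 cf rfl, ev_comp sF.ev c2 z2, ev_comp sh.ev q0 rfl]
      with ⟨A, B, X⟩ a1 a2 a3 a4 a5 a6 a7 a8 a9 a10 a11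
    simp only at a1 a2 a3 a4 a5 a6 a7 a8 a9 a10 a11 ⊢
    have e1 := slice3 a2
    have e2 := chain2 (f := h) (c1 := fun s => s) (c2 := fun s => G (A, B, s)) (t := 0)
      (by simpa only [a3] using a11) (hasDerivAt_id' _) e1
    have e3 := chain3 (f := F) (c1 := fun _ => A) (c2 := fun _ => k (B, A)) (t := 0)
      (by simpa only [a3, a4] using a10) (hasDerivAt_const _ _) (hasDerivAt_const _ _) e2
    have e4 := e1.unique (e3.congr_of_eventuallyEq (ev3 a1))
    simp only [a3, a4, a6] at e4
    have e5 : D3 F (A, k (B, A), 0) = B * κ A := by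
      have : D3 F ((K (B, A)).2, (K (B, A)).1, 0) / κ (K (B, A)).2 = B := a7
      rw [a8, div_eq_iff a9] at this
      exact this
    rw [e5] at e4
    linear_combination e4 + B * a5
  · filter_upwards [ev_comp hE.eventually_nhds p1 rfl, ev_comp sG.ev p1 rfl, G1,
      ev_comp kA cf rfl, ev_comp k1 cf rfl, ev_comp H1 q1 rfl,
      ev_comp H2 q1 rfl, ev_comp D3F c1 z1, ev_comp sF.ev c1 z1, ev_comp sk.ev q0 rfl,
      ev_comp sh.ev q1 rfl]
      with ⟨A, B, X⟩ a1 a2 a3 a4 a5 a7 a8 a9 a10 a11 a12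
    simp only at a1 a2 a3 a4 a5 a7 a8 a9 a10 a11 a12 ⊢
    have e1 := slice2 a2
    have e2 := chain2 (f := h) (c1 := fun _ => X) (c2 := fun s => G (A, s, X)) (t := 0)
      (by simpa only [a3] using a12) (hasDerivAt_const _ _) e1
    have e3 := chain3 (f := F) (c1 := fun _ => A) (c2 := fun s => k (s, A)) (t := 0)
      (by simpa only [a3, a4] using a10) (hasDerivAt_const _ _) (slice21 a11) e2
    have e4 := e1.unique (e3.congr_of_eventuallyEq (ev2 a1))
    simp only [a3, a4, a5, a9] at e4
    have e5 : D2 F (A, 0, h (X, A)) = X := by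
      have : D2 F ((H (X, A)).2, 0, (H (X, A)).1) = X := a7
      rw [a8] at this
      exact this
    rw [e5] at e4
    linear_combination e4

end PCR

namespace PCR

/-- first derivative of `h` along the curve `X ↦ (X, G (A, B, X))` -/
noncomputable def dd (h : ℝ × ℝ → ℝ) (G : R3 → ℝ) (A B X : ℝ) : ℝ :=
  E1 h (X, G (A, B, X)) + E2 h (X, G (A, B, X)) * D3 G (A, B, X)

theorem dd_deriv {h : ℝ × ℝ → ℝ} {G : R3 → ℝ} {A B : ℝ} (sh : SM h (0, G (A, B, 0)))
    (sG : SM G (A, B, 0)) :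
    ∀ᶠ X in 𝓝 (0 : ℝ), HasDerivAt (fun X => h (X, G (A, B, X))) (dd h G A B X) X := by
  have c : ContinuousAt (fun X : ℝ => (X, G (A, B, X))) 0 :=
    continuousAt_id.prodMk (slice3 sG).continuousAt
  filter_upwards [ev3 sG.ev, ev_comp sh.ev c rfl] with X h1 h2
  have := chain2 (f := h) (c1 := fun s => s) h2 (hasDerivAt_id' X) (slice3 h1)
  simpa [dd] using this

theorem dd_deriv2 {h : ℝ × ℝ → ℝ} {G : R3 → ℝ} {A B : ℝ} (sh : SM h (0, G (A, B, 0)))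
    (sG : SM G (A, B, 0)) :
    HasDerivAt (dd h G A B) (E1 (E1 h) (0, G (A, B, 0)) + E2 (E1 h) (0, G (A, B, 0)) *
      D3 G (A, B, 0) + ((E1 (E2 h) (0, G (A, B, 0)) + E2 (E2 h) (0, G (A, B, 0)) *
      D3 G (A, B, 0)) * D3 G (A, B, 0) + E2 h (0, G (A, B, 0)) * D3 (D3 G) (A, B, 0))) 0 := by
  have e1 := chain2 (f := E1 h) (c1 := fun s => s) sh.E1 (hasDerivAt_id' 0) (slice3 sG)
  have e2 := chain2 (f := E2 h) (c1 := fun s => s) sh.E2 (hasDerivAt_id' 0) (slice3 sG)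
  have := e1.add (e2.mul (slice3 sG.D3))
  simp only [mul_one] at this
  exact this

theorem c32a {F G Q : R3 → ℝ} {h1 h2 k1 k2 : ℝ × ℝ → ℝ} {ε : ℝ} (sF : SM F 0)
    (hFQ : ∀ᶠ p : R3 in 𝓝 0, D3 (D3 F) p = Q (p.2.2, F p, D3 F p))
    (sG : SM G 0) (sh1 : SM h1 0) (sh2 : SM h2 0) (sk1 : SM k1 0) (sk2 : SM k2 0)
    (zh1 : h1 0 = 0) (zk1 : k1 0 = 0) (zk2 : k2 0 = 0)
    (hE : ∀ᶠ p : R3 in 𝓝 0, h2 (p.2.2, G p) = F (k2 (p.2.1, p.1), k1 (p.2.1, p.1),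
      h1 (p.2.2, G p)))
    (G2 : ∀ᶠ p : R3 in 𝓝 0, G (p.1, p.2.1, 0) = p.1)
    (G3 : ∀ᶠ p : R3 in 𝓝 0, D3 G (p.1, p.2.1, 0) = ε * p.2.1) :
    ∀ᶠ p : R3 in 𝓝 0, ∃ v1 v2 w1 w2 P,
      v1 = E1 h1 (0, p.1) + E2 h1 (0, p.1) * (ε * p.2.1) ∧
      v2 = E1 h2 (0, p.1) + E2 h2 (0, p.1) * (ε * p.2.1) ∧
      w1 = E1 (E1 h1) (0, p.1) + E2 (E1 h1) (0, p.1) * (ε * p.2.1) + ((E1 (E2 h1) (0, p.1)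
        + E2 (E2 h1) (0, p.1) * (ε * p.2.1)) * (ε * p.2.1) + E2 h1 (0, p.1)
          * D3 (D3 G) (p.1, p.2.1, 0)) ∧
      w2 = E1 (E1 h2) (0, p.1) + E2 (E1 h2) (0, p.1) * (ε * p.2.1) + ((E1 (E2 h2) (0, p.1)
        + E2 (E2 h2) (0, p.1) * (ε * p.2.1)) * (ε * p.2.1) + E2 h2 (0, p.1)
          * D3 (D3 G) (p.1, p.2.1, 0)) ∧
      P = D3 F (k2 (p.2.1, p.1), k1 (p.2.1, p.1), h1 (0, p.1)) ∧
      v2 = P * v1 ∧ v1 * w2 - v2 * w1 = Q (h1 (0, p.1), h2 (0, p.1), P) * v1 ^ 3 := by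
  have p2 : ContinuousAt (fun p : R3 => ((p.1, p.2.1, 0) : R3)) 0 := by fun_prop
  have q0 : ContinuousAt (fun p : R3 => ((0, p.1) : ℝ × ℝ)) 0 := by fun_prop
  have s0 : SM (fun p : R3 => ((0, p.1) : ℝ × ℝ)) 0 := (SM.const 0).prodMk SM.id.fst
  have sB : SM (fun p : R3 => ((p.2.1, p.1) : ℝ × ℝ)) 0 := SM.id.snd.fst.prodMk SM.id.fst
  have cF : ContinuousAt (fun p : R3 => ((k2 (p.2.1, p.1), k1 (p.2.1, p.1), h1 (0, p.1)) : R3)) 0 :=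
    ((sk2.comp' sB rfl).prodMk ((sk1.comp' sB rfl).prodMk (sh1.comp' s0 rfl))).cont
  have zF : ((k2 ((0 : R3).2.1, (0 : R3).1), k1 ((0 : R3).2.1, (0 : R3).1), h1 (0, (0 : R3).1)) : R3)
      = 0 := by
    have a1 : h1 (0, (0 : R3).1) = 0 := zh1
    have a2 : k1 ((0 : R3).2.1, (0 : R3).1) = 0 := zk1
    have a3 : k2 ((0 : R3).2.1, (0 : R3).1) = 0 := zk2
    rw [a1, a2, a3]; rfl
  filter_upwards [ev_comp hE.eventually_nhds p2 rfl, ev_comp sG.ev p2 rfl, G2, G3,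
    ev_comp sh1.ev q0 rfl, ev_comp sh2.ev q0 rfl, ev_comp sF.ev cF zF, ev_comp hFQ cF zF]
    with ⟨A, B, X⟩ a1 a2 a3 a4 a5 a6 a7 a8
  simp only at a1 a2 a3 a4 a5 a6 a7 a8 ⊢
  have t1 : SM h1 (0, G (A, B, 0)) := by rw [a3]; exact a5
  have t2 : SM h2 (0, G (A, B, 0)) := by rw [a3]; exact a6
  have b1 := dd_deriv t1 a2
  have b2 := dd_deriv t2 a2
  have b3 := dd_deriv2 t1 a2
  have b4 := dd_deriv2 t2 a2
  have a1' := ev3 a1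
  simp only at a1'
  have b5 := b1.self_of_nhds
  have cc : ContinuousAt (fun X => ((k2 (B, A), k1 (B, A), h1 (X, G (A, B, X))) : R3)) 0 :=
    continuousAt_const.prodMk (continuousAt_const.prodMk b5.continuousAt)
  have b6 : ∀ᶠ X in 𝓝 (0 : ℝ), dd h2 G A B X =
      D3 F (k2 (B, A), k1 (B, A), h1 (X, G (A, B, X))) * dd h1 G A B X := by
    filter_upwards [b1, b2, a1'.eventually_nhds, ev_comp a7.ev cc (by rw [a3])] with X c1 c2 c3 c4
    have e := chain3 (f := F) (c1 := fun _ => k2 (B, A)) (c2 := fun _ => k1 (B, A)) c4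
      (hasDerivAt_const _ _) (hasDerivAt_const _ _) c1
    have := c2.unique (e.congr_of_eventuallyEq c3)
    rw [this]; ring
  have s7 : SM F (k2 (B, A), k1 (B, A), h1 (0, G (A, B, 0))) := by rw [a3]; exact a7
  have b7 := chain3 (f := D3 F) (c1 := fun _ => k2 (B, A)) (c2 := fun _ => k1 (B, A))
    (c3 := fun X => h1 (X, G (A, B, X))) (t := 0) s7.D3
      (hasDerivAt_const _ _) (hasDerivAt_const _ _) b5
  have b8 := b4.unique ((b7.mul b3).congr_of_eventuallyEq b6)
  have b9 := b6.self_of_nhds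
  have b10 := a1'.self_of_nhds
  simp only [a3, a4, dd] at b8 b9 b10
  refine ⟨_, _, _, _, _, rfl, rfl, rfl, rfl, rfl, b9, ?_⟩
  rw [b10, ← a8]
  rw [b8, b9]
  ring

theorem iter23 {f f1 f2 : ℝ → ℝ} {x f3 : ℝ} (h1 : ∀ᶠ s in 𝓝 x, HasDerivAt f (f1 s) s)
    (h2 : ∀ᶠ s in 𝓝 x, HasDerivAt f1 (f2 s) s) (h3 : HasDerivAt f2 f3 x) :
    deriv f x = f1 x ∧ iteratedDeriv 2 f x = f2 x ∧ iteratedDeriv 3 f x = f3 := by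
  have e1 : deriv f =ᶠ[𝓝 x] f1 := h1.mono fun s h => h.deriv
  have e2 : deriv (deriv f) =ᶠ[𝓝 x] f2 := by
    filter_upwards [e1.eventuallyEq_nhds, h2] with s a b
    rw [a.deriv_eq, b.deriv]
  refine ⟨e1.self_of_nhds, ?_, ?_⟩
  · simp only [iteratedDeriv_succ, iteratedDeriv_zero]
    exact e2.self_of_nhds
  · simp only [iteratedDeriv_succ, iteratedDeriv_zero]
    rw [e2.deriv_eq, h3.deriv]

theorem iter_slice3 {F : R3 → ℝ} {a b x : ℝ} (h : SM F (a, b, x)) :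
    deriv (fun s => F (a, b, s)) x = D3 F (a, b, x) ∧
    iteratedDeriv 2 (fun s => F (a, b, s)) x = D3 (D3 F) (a, b, x) ∧
    iteratedDeriv 3 (fun s => F (a, b, s)) x = D3 (D3 (D3 F)) (a, b, x) :=
  iter23 (f1 := fun s => D3 F (a, b, s)) (f2 := fun s => D3 (D3 F) (a, b, s))
    ((ev3 h.ev).mono fun _ h => slice3 h) ((ev3 h.ev).mono fun _ h => slice3 h.D3)
    (slice3 h.D3.D3)

theorem iter_slice2 {F : R3 → ℝ} {a b x : ℝ} (h : SM F (a, b, x)) :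
    deriv (fun s => F (a, s, x)) b = D2 F (a, b, x) ∧
    iteratedDeriv 2 (fun s => F (a, s, x)) b = D2 (D2 F) (a, b, x) ∧
    iteratedDeriv 3 (fun s => F (a, s, x)) b = D2 (D2 (D2 F)) (a, b, x) :=
  iter23 (f1 := fun s => D2 F (a, s, x)) (f2 := fun s => D2 (D2 F) (a, s, x))
    ((ev2 h.ev).mono fun _ h => slice2 h) ((ev2 h.ev).mono fun _ h => slice2 h.D2)
    (slice2 h.D2.D2)

open Asymptotics in
theorem c32b {φ r P : ℝ → ℝ} {ε π u v U V a1 m1 m1' n1 a2 m2 m2' n2 P' : ℝ} (sφ : SM φ 0)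
    (sr : SM r π) (hP : HasDerivAt P P' 0) (P0 : P 0 = π) (hJ : u * V - v * U ≠ 0)
    (hev : ∀ᶠ B in 𝓝 (0 : ℝ), ∃ v1 v2 w1 w2, v1 = u + v * (ε * B) ∧ v2 = U + V * (ε * B) ∧
      w1 = a1 + m1 * (ε * B) + ((m1' + n1 * (ε * B)) * (ε * B) + v * φ B) ∧
      w2 = a2 + m2 * (ε * B) + ((m2' + n2 * (ε * B)) * (ε * B) + V * φ B) ∧
      v2 = P B * v1 ∧ v1 * w2 - v2 * w1 = r (P B) * v1 ^ 3)
    (ch : v * n2 - V * n1 = r π * v ^ 3 + deriv r π * v ^ 2 * (V - π * v)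
      + iteratedDeriv 2 r π / 2 * v * (V - π * v) ^ 2
      + iteratedDeriv 3 r π / 6 * (V - π * v) ^ 3) :
    iteratedDeriv 3 φ 0 = 0 := by
  have hU : U = π * u := by
    obtain ⟨v1, v2, w1, w2, e1, e2, -, -, e3, -⟩ := hev.self_of_nhds
    rw [P0] at e3
    simp only [mul_zero, add_zero] at e1 e2
    rw [← e1, ← e2, e3]
  have T := taylor3 sr
  have tP : Tendsto P (𝓝 0) (𝓝 π) := by rw [← P0]; exact hP.continuousAt
  have T2 := T.comp_tendsto tP
  have oP : (fun B => (P B - π) ^ 3) =O[𝓝 0] fun B : ℝ => B ^ 3 := by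
    refine IsBigO.pow ?_ 3
    have := hP.isBigO_sub
    simpa [P0] using this
  have T3 := T2.trans_isBigO oP
  have bd : (fun B : ℝ => (u + v * (ε * B)) ^ 3) =O[𝓝 0] fun _ => (1 : ℝ) := by
    have : ContinuousAt (fun B : ℝ => (u + v * (ε * B)) ^ 3) 0 := by fun_prop
    exact this.isBigO_one ℝ
  have T4 := (T3.mul_isBigO bd).const_mul_left (1 / (u * V - v * U))
  set J := u * V - v * U with hJd
  set q0 := r π
  set q1 := deriv r π
  set q2 := iteratedDeriv 2 r π
  set q3 := iteratedDeriv 3 r π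
  have := taylor3_unique sφ
    (c0 := (q0 * u ^ 3 - (u * a2 - U * a1)) / J)
    (c1 := ε * (3 * q0 * u ^ 2 * v + q1 * u ^ 2 * (V - π * v)
      - (u * (m2 + m2') + v * a2 - U * (m1 + m1') - V * a1)) / J)
    (c2 := ε ^ 2 * (3 * q0 * u * v ^ 2 + 2 * q1 * u * v * (V - π * v) + q2 / 2 * u * (V - π * v) ^ 2
      - (u * n2 + v * (m2 + m2') - U * n1 - V * (m1 + m1'))) / J)
    (c3 := 0) (by
      refine (T4.congr' ?_ ?_)
      · filter_upwards [hev] with B hB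
        obtain ⟨v1, v2, w1, w2, e1, e2, e3, e4, e5, e6⟩ := hB
        simp only [Function.comp]
        rw [← e1]
        have hd : (P B - π) * v1 = ε * B * (V - π * v) := by
          rw [sub_mul, ← e5, e2, e1, hU]; ring
        have x1 : (r (P B) - (q0 + q1 * (P B - π) + q2 / 2 * (P B - π) ^ 2
            + q3 / 6 * (P B - π) ^ 3)) * v1 ^ 3 = v1 * w2 - v2 * w1 - (q0 * v1 ^ 3
            + q1 * v1 ^ 2 * (ε * B * (V - π * v)) + q2 / 2 * v1 * (ε * B * (V - π * v)) ^ 2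
            + q3 / 6 * (ε * B * (V - π * v)) ^ 3) := by
          rw [e6, ← hd]; ring
        rw [x1, e1, e2, e3, e4]
        have hJ1 : (u * V - v * U) * J⁻¹ = 1 := by rw [← hJd]; exact mul_inv_cancel₀ hJ
        simp only [div_eq_mul_inv, one_mul]
        generalize J⁻¹ = j at hJ1 ⊢
        linear_combination (ε ^ 3 * B ^ 3 * j) * ch + φ B * hJ1
      · filter_upwards with B
        simp)
  simpa using this.2.2.2

theorem c32 {F G Q : R3 → ℝ} {h1 h2 k1 k2 : ℝ × ℝ → ℝ} {ε : ℝ} (hF : Reg F) (hQ : SM Q 0)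
    (hFQ : ∀ᶠ p : R3 in 𝓝 0, D3 (D3 F) p = Q (p.2.2, F p, D3 F p))
    (sG : SM G 0) (sh1 : SM h1 0) (sh2 : SM h2 0) (sk1 : SM k1 0) (sk2 : SM k2 0)
    (zh1 : h1 0 = 0) (zh2 : h2 0 = 0) (zk1 : k1 0 = 0) (zk2 : k2 0 = 0)
    (hJ : E1 h1 0 * E2 h2 0 - E2 h1 0 * E1 h2 0 ≠ 0)
    (hE : ∀ᶠ p : R3 in 𝓝 0, h2 (p.2.2, G p) = F (k2 (p.2.1, p.1), k1 (p.2.1, p.1),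
      h1 (p.2.2, G p)))
    (G2 : ∀ᶠ p : R3 in 𝓝 0, G (p.1, p.2.1, 0) = p.1)
    (G3 : ∀ᶠ p : R3 in 𝓝 0, D3 G (p.1, p.2.1, 0) = ε * p.2.1)
    (ch : Chain Q F (fun t => h1 (0, t)) (fun t => h2 (0, t)) (fun t => k1 (0, t))
      (fun t => k2 (0, t))) :
    ∀ᶠ A in 𝓝 (0 : ℝ), iteratedDeriv 3 (fun B => D3 (D3 G) (A, B, 0)) 0 = 0 := by
  have key := c32a (ε := ε) hF.sm hFQ sG sh1 sh2 sk1 sk2 zh1 zk1 zk2 hE G2 G3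
  have cA3 : ContinuousAt (fun A : ℝ => ((A, 0, 0) : R3)) 0 := by fun_prop
  have cA2 : ContinuousAt (fun A : ℝ => ((0, A) : ℝ × ℝ)) 0 := by fun_prop
  have sA : SM (fun A : ℝ => ((0, A) : ℝ × ℝ)) 0 := (SM.const 0).prodMk SM.id
  have sP : SM (fun A : ℝ => ((k2 (0, A), k1 (0, A), h1 (0, A)) : R3)) 0 :=
    (sk2.comp' sA rfl).prodMk ((sk1.comp' sA rfl).prodMk (sh1.comp' sA rfl))
  have zP : ((k2 (0, 0), k1 (0, 0), h1 (0, 0)) : R3) = 0 := by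
    have a1 : h1 (0, 0) = 0 := zh1
    have a2 : k1 (0, 0) = 0 := zk1
    have a3 : k2 (0, 0) = 0 := zk2
    rw [a1, a2, a3]; rfl
  have sM : SM (fun A : ℝ => ((h1 (0, A), h2 (0, A), D3 F (k2 (0, A), k1 (0, A), h1 (0, A))) : R3))
      0 := (sh1.comp' sA rfl).prodMk ((sh2.comp' sA rfl).prodMk (hF.sm.D3.comp' sP zP))
  have zM : ((h1 (0, 0), h2 (0, 0), D3 F (k2 (0, 0), k1 (0, 0), h1 (0, 0))) : R3) = 0 := by
    have a1 : h1 (0, 0) = 0 := zh1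
    have a2 : h2 (0, 0) = 0 := zh2
    rw [zP, hF.d3, a1, a2]; rfl
  have sJ : SM (fun p => E1 h1 p * E2 h2 p - E2 h1 p * E1 h2 p) 0 :=
    (sh1.E1.mul sh2.E2).sub (sh1.E2.mul sh2.E1)
  have d1 : deriv (fun t => h1 (0, t)) =ᶠ[𝓝 0] fun t => E2 h1 (0, t) := by
    filter_upwards [ev_comp sh1.ev cA2 rfl] with t ht using (slice22 ht).deriv
  have d2 : deriv (fun t => h2 (0, t)) =ᶠ[𝓝 0] fun t => E2 h2 (0, t) := by
    filter_upwards [ev_comp sh2.ev cA2 rfl] with t ht using (slice22 ht).deriv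
  filter_upwards [ev_comp key.eventually_nhds cA3 rfl, ev_comp sG.ev cA3 rfl,
    ev_comp (sJ.cont.eventually_ne hJ) cA2 rfl,
    ch, d1, d2, d1.eventuallyEq_nhds, d2.eventuallyEq_nhds, ev_comp sh1.ev cA2 rfl,
    ev_comp sh2.ev cA2 rfl, ev_comp sk1.ev cA2 rfl, ev_comp sk2.ev cA2 rfl,
    ev_comp hF.sm.ev sP.cont zP, ev_comp hQ.ev sM.cont zM] with
    A a1 a2 a3 a4 a5 a6 a7 a8 a9 a10 a11 a12 a13 a14
  rw [a5, a6, a7.deriv_eq, a8.deriv_eq, (slice22 a9.E2).deriv, (slice22 a10.E2).deriv] at a4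
  have b1 := ev2 a1
  simp only at b1
  have e3 := iter_slice3 (F := Q) a14
  have sG3 : SM (fun B => D3 (D3 G) (A, B, 0)) 0 :=
    SM.comp (f := fun B : ℝ => ((A, B, 0) : R3)) a2.D3.D3
      ((SM.const A).prodMk (SM.id.prodMk (SM.const 0)))
  have sr : SM (fun s => Q (h1 (0, A), h2 (0, A), s)) (D3 F (k2 (0, A), k1 (0, A), h1 (0, A))) :=
    SM.comp (f := fun s : ℝ => ((h1 (0, A), h2 (0, A), s) : R3)) a14
      ((SM.const _).prodMk ((SM.const _).prodMk SM.id))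
  have hP := chain3 (f := D3 F) (c1 := fun B => k2 (B, A)) (c2 := fun B => k1 (B, A))
    (c3 := fun _ => h1 (0, A)) (t := 0) a13.D3 (slice21 a12) (slice21 a11) (hasDerivAt_const _ _)
  refine c32b (ε := ε) (u := E1 h1 (0, A)) (v := E2 h1 (0, A)) (U := E1 h2 (0, A))
    (V := E2 h2 (0, A)) sG3 sr hP rfl a3 ?_ ?_
    (n1 := E2 (E2 h1) (0, A)) (n2 := E2 (E2 h2) (0, A)) (a1 := E1 (E1 h1) (0, A))
    (m1 := E2 (E1 h1) (0, A)) (m1' := E1 (E2 h1) (0, A)) (a2 := E1 (E1 h2) (0, A))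
    (m2 := E2 (E1 h2) (0, A)) (m2' := E1 (E2 h2) (0, A))
  · filter_upwards [b1] with B hB
    obtain ⟨v1, v2, w1, w2, P, c1, c2, c3, c4, c5, c6, c7⟩ := hB
    subst c5
    exact ⟨v1, v2, w1, w2, c1, c2, c3, c4, c6, c7⟩
  · rw [e3.1, e3.2.1, e3.2.2, a4]
    rfl

end PCR

namespace PCR

theorem LDP.det {Φ Φ' : ℝ × ℝ → ℝ × ℝ} (h : LDP Φ Φ') :
    E1 (fun p => (Φ p).1) 0 * E2 (fun p => (Φ p).2) 0
      - E2 (fun p => (Φ p).1) 0 * E1 (fun p => (Φ p).2) 0 ≠ 0 := by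
  have s1 : SM (fun p => (Φ p).1) 0 := h.sm.fst
  have s2 : SM (fun p => (Φ p).2) 0 := h.sm.snd
  have inj : ∀ u v : ℝ, E1 (fun p => (Φ p).1) 0 * u + E2 (fun p => (Φ p).1) 0 * v = 0 →
      E1 (fun p => (Φ p).2) 0 * u + E2 (fun p => (Φ p).2) 0 * v = 0 → u = 0 ∧ v = 0 := by
    intro u v e1 e2
    have f1 : fderiv ℝ Φ 0 (u, v) = 0 := by
      have : fderiv ℝ Φ 0 = (fderiv ℝ (fun p => (Φ p).1) 0).prod
        (fderiv ℝ (fun p => (Φ p).2) 0) := s1.diff.fderiv_prodMk s2.diff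
      rw [this]
      simp only [ContinuousLinearMap.prod_apply, fderiv2, Prod.mk_eq_zero]
      constructor <;> linarith
    have c1 : HasFDerivAt (fun p => Φ' (Φ p)) ((fderiv ℝ Φ' (Φ 0)).comp (fderiv ℝ Φ 0)) 0 :=
      HasFDerivAt.comp (0 : ℝ × ℝ) (by rw [h.z]; exact h.sm'.diff.hasFDerivAt)
        h.sm.diff.hasFDerivAt
    have c2 : HasFDerivAt (fun p => Φ' (Φ p)) (ContinuousLinearMap.id ℝ (ℝ × ℝ)) 0 :=
      (hasFDerivAt_id (0 : ℝ × ℝ)).congr_of_eventuallyEq h.li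
    have c3 := congrArg (fun L => L (u, v)) (c1.unique c2)
    simp only [ContinuousLinearMap.comp_apply, f1, map_zero, ContinuousLinearMap.id_apply] at c3
    have := Prod.mk_eq_zero.1 c3.symm
    exact this
  intro hd
  obtain ⟨a, b⟩ := inj (E2 (fun p => (Φ p).2) 0) (-E1 (fun p => (Φ p).2) 0)
    (by linarith) (by ring)
  obtain ⟨c, d⟩ := inj (E2 (fun p => (Φ p).1) 0) (-E1 (fun p => (Φ p).1) 0)
    (by ring) (by linarith)
  have := inj 1 0 (by linarith) (by linarith)
  exact one_ne_zero this.1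

theorem D12_comm {f : R3 → ℝ} {p : R3} (h : SM f p) :
    D2 (D1 f) p = D1 (D2 f) p := pd_comm h _ _

theorem dualN2 {G G' : R3 → ℝ} (hG : N2 G) (s : SM G' 0) (z : G' 0 = 0) (hd : Dual G G') :
    (∀ᶠ p : R3 in 𝓝 0, G' (p.1, p.2.1, 0) = p.1) ∧
    (∀ᶠ p : R3 in 𝓝 0, D3 G' (p.1, p.2.1, 0) = (-1) * p.2.1) ∧
    (∀ᶠ p : R3 in 𝓝 0, D3 (D3 G') (p.1, p.2.1, 0) = - D2 (D2 G) (p.1, 0, p.2.1)) := by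
  have c1 : ContinuousAt (fun p : R3 => ((p.1, 0, p.2.1) : R3)) 0 := by fun_prop
  have c2 : ContinuousAt (fun p : R3 => ((p.1, p.2.1, 0) : R3)) 0 := by fun_prop
  have c3 : ContinuousAt (fun p : R3 => ((p.1, 0, p.2.2) : R3)) 0 := by fun_prop
  have r1 : ∀ᶠ p : R3 in 𝓝 0, G' (p.1, p.2.1, 0) = p.1 := by
    filter_upwards [ev_comp (hd.left hG.sm hG.z) c1 rfl, ev_comp hG.i1 c1 rfl] with p h1 h2
    rw [h2] at h1
    exact h1
  have g1 : ∀ᶠ p : R3 in 𝓝 0, D1 G (p.1, 0, p.2.2) = 1 := by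
    filter_upwards [hG.i1.eventually_nhds, ev_comp hG.sm.ev c3 rfl] with p h1 h2
    exact (slice1 h2).unique ((hasDerivAt_id' _).congr_of_eventuallyEq (ev1 h1))
  have g11 : ∀ᶠ p : R3 in 𝓝 0, D1 (D1 G) (p.1, 0, p.2.2) = 0 := by
    filter_upwards [g1.eventually_nhds, ev_comp hG.sm.ev c3 rfl] with p h1 h2
    exact (slice1 h2.D1).unique ((hasDerivAt_const _ _).congr_of_eventuallyEq (ev1 h1))
  have g12 : ∀ᶠ p : R3 in 𝓝 0, D1 (D2 G) (p.1, 0, p.2.2) = 0 := by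
    filter_upwards [hG.ii2.eventually_nhds, ev_comp hG.sm.ev c3 rfl] with p h1 h2
    exact (slice1 h2.D2).unique ((hasDerivAt_const _ _).congr_of_eventuallyEq (ev1 h1))
  have dd := dual_derivs hG.sm hd s z
  have r2 : ∀ᶠ p : R3 in 𝓝 0, D3 G' (p.1, p.2.1, 0) = (-1) * p.2.1 := by
    filter_upwards [ev_comp dd c2 rfl, r1, ev_comp g1 c1 rfl, ev_comp hG.ii2 c1 rfl]
      with p h1 h2 h3 h4
    rw [h2] at h1
    have := h1.2.2
    rw [h3, h4] at this
    linarith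
  refine ⟨r1, r2, ?_⟩
  filter_upwards [ev_comp dd.eventually_nhds c2 rfl, r1, r2, ev_comp g1 c1 rfl,
    ev_comp hG.ii2 c1 rfl, ev_comp g11 c1 rfl, ev_comp g12 c1 rfl, ev_comp hG.sm.ev c1 rfl,
    ev_comp s.ev c2 rfl] with ⟨Y, X, B⟩ h1 h2 h3 h4 h5 h6 h7 h8 h9
  simp only at *
  have a1 := chain3 (f := D1 G) (c1 := fun B => G' (Y, X, B)) (c2 := fun B => B) (c3 := fun _ => X)
    (t := 0) (by rw [h2]; exact h8.D1) (slice3 h9) (hasDerivAt_id' _) (hasDerivAt_const _ _)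
  have a2 := chain3 (f := D2 G) (c1 := fun B => G' (Y, X, B)) (c2 := fun B => B) (c3 := fun _ => X)
    (t := 0) (by rw [h2]; exact h8.D2) (slice3 h9) (hasDerivAt_id' _) (hasDerivAt_const _ _)
  have a3 := (a1.mul (slice3 h9.D3)).add a2
  have a4 := a3.unique ((hasDerivAt_const 0 (0 : ℝ)).congr_of_eventuallyEq
    ((ev3 h1).mono fun t ht => ht.2.2))
  simp only [h2, h3, h4, h6, h7, D12_comm h8] at a4
  linarith

theorem Chain.congr {Q F : R3 → ℝ} {x y b a x' y' b' a' : ℝ → ℝ} (h : Chain Q F x y b a)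
    (ex : x' =ᶠ[𝓝 0] x) (ey : y' =ᶠ[𝓝 0] y) (eb : b' =ᶠ[𝓝 0] b) (ea : a' =ᶠ[𝓝 0] a) :
    Chain Q F x' y' b' a' := by
  filter_upwards [h, ex, ey, eb, ea, ex.deriv, ey.deriv, ex.deriv.deriv, ey.deriv.deriv] with
    t h1 h2 h3 h4 h5 h6 h7 h8 h9
  rw [h2, h3, h4, h5, h6, h7, h8, h9]
  exact h1

theorem s1 {F : R3 → ℝ} (hF : Reg F) :
    ∃ G H K Hi Ki, N2 G ∧ Inc F G H K ∧ LDP H Hi ∧ LDP K Ki ∧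
      (∀ᶠ A in 𝓝 (0 : ℝ), iteratedDeriv 3 (fun B => D3 (D3 G) (A, B, 0)) 0 = 0) ∧
      (∀ᶠ A in 𝓝 (0 : ℝ), iteratedDeriv 3 (fun X => D2 (D2 G) (A, 0, X)) 0 = 0) := by
  obtain ⟨F', hF', hd⟩ := reg_dual hF
  obtain ⟨Q, sQ, hQ⟩ := exists_Q hF
  obtain ⟨Q', sQ', hQ'⟩ := exists_Q hF'
  obtain ⟨b, x, sb, sx, b0, x0, db0, dx0, ch, ch'⟩ := chain_exists hF hF' sQ sQ'
  obtain ⟨G1, H1, K1, Hi1, Ki1, sG1, zG1, I1, LH1, LK1, m1, m2, nd, eH, eK⟩ :=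
    s1a hF hF' hd sb sx b0 x0 db0 dx0
  obtain ⟨G, H2, K2, Hi2, Ki2, hG, I2, LH2, LK2, eH2, eK2⟩ := s1b sG1 zG1 m1 m2 nd
  have LH := LH2.comp LH1
  have LK := LK2.comp LK1
  have I := I1.trans I2 LH2.sm LH2.z LK2.sm LK2.z
  have eH' : ∀ᶠ t in 𝓝 (0 : ℝ), H1 (H2 (0, t)) = (x t, F (t, b t, x t)) := by
    filter_upwards [eH, eH2] with t h1 h2
    rw [h2, h1]
  have eK' : ∀ᶠ t in 𝓝 (0 : ℝ), K1 (K2 (0, t)) = (b t, t) := by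
    filter_upwards [eK, eK2] with t h1 h2
    rw [h2, h1]
  generalize hH : (fun p => H1 (H2 p)) = H at LH I
  generalize hK : (fun p => K1 (K2 p)) = K at LK I
  have eH : ∀ᶠ t in 𝓝 (0 : ℝ), H (0, t) = (x t, F (t, b t, x t)) := by rw [← hH]; exact eH'
  have eK : ∀ᶠ t in 𝓝 (0 : ℝ), K (0, t) = (b t, t) := by rw [← hK]; exact eK'
  have zH1 : (H 0).1 = 0 := by rw [LH.z]; rfl
  have zH2 : (H 0).2 = 0 := by rw [LH.z]; rfl
  have zK1 : (K 0).1 = 0 := by rw [LK.z]; rfl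
  have zK2 : (K 0).2 = 0 := by rw [LK.z]; rfl
  have e1 : (fun t => (H (0, t)).1) =ᶠ[𝓝 0] x := eH.mono fun t h => by simp [h]
  have e2 : (fun t => (H (0, t)).2) =ᶠ[𝓝 0] fun t => F (t, b t, x t) :=
    eH.mono fun t h => by simp [h]
  have e3 : (fun t => (K (0, t)).1) =ᶠ[𝓝 0] b := eK.mono fun t h => by simp [h]
  have e4 : (fun t => (K (0, t)).2) =ᶠ[𝓝 0] fun t => t := eK.mono fun t h => by simp [h]
  refine ⟨G, H, K, _, _, hG, I, LH, LK, ?_, ?_⟩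
  · exact c32 (ε := 1) (h1 := fun p => (H p).1) (h2 := fun p => (H p).2) (k1 := fun p => (K p).1)
      (k2 := fun p => (K p).2) hF sQ hQ hG.sm LH.sm.fst LH.sm.snd LK.sm.fst LK.sm.snd
      zH1 zH2 zK1 zK2 LH.det (I.eq hG.sm hG.z) hG.i2 (by simpa using hG.ii1)
      (ch.congr e1 e2 e3 e4)
  · have g1 : D1 G 0 = 1 :=
      (slice1 (a := 0) (b := 0) (x := 0) hG.sm).unique
        ((hasDerivAt_id' _).congr_of_eventuallyEq (ev1 (a := 0) (b := 0) (x := 0) hG.i1))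
    obtain ⟨G', sG', zG', dG⟩ := dual_exists hG.sm hG.z (by rw [g1]; simp)
    obtain ⟨r1, r2, r3⟩ := dualN2 hG sG' zG' dG
    have hE : ∀ᶠ p : R3 in 𝓝 0, (K (p.2.2, G' p)).2 = F' ((H (p.2.1, p.1)).2, (H (p.2.1, p.1)).1,
        (K (p.2.2, G' p)).1) := by
      have s3 : SM (fun p : R3 => (((G' p, p.2.2, p.2.1), p.1) : R3 × ℝ)) 0 :=
        (sG'.prodMk (SM.id.snd.snd.prodMk SM.id.snd.fst)).prodMk SM.id.fst
      have z3 : (((G' 0, (0 : R3).2.2, (0 : R3).2.1), (0 : R3).1) : R3 × ℝ) = 0 := by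
        rw [zG']; rfl
      have s5 : SM (fun p : R3 => H (p.2.1, p.1)) 0 :=
        LH.sm.comp' (SM.id.snd.fst.prodMk SM.id.fst) rfl
      have s6 : SM (fun p : R3 => K (p.2.2, G' p)) 0 :=
        LK.sm.comp' (SM.id.snd.snd.prodMk sG') (by rw [zG']; rfl)
      have s4 : SM (fun p : R3 => ((((H (p.2.1, p.1)).2, (H (p.2.1, p.1)).1,
        (K (p.2.2, G' p)).1), (K (p.2.2, G' p)).2) : R3 × ℝ)) 0 :=
        (s5.snd.prodMk (s5.fst.prodMk s6.fst)).prodMk s6.snd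
      have z4 : ((((H ((0 : R3).2.1, (0 : R3).1)).2, (H ((0 : R3).2.1, (0 : R3).1)).1,
        (K ((0 : R3).2.2, G' 0)).1), (K ((0 : R3).2.2, G' 0)).2) : R3 × ℝ) = 0 := by
        rw [zG', show H ((0 : R3).2.1, (0 : R3).1) = 0 from LH.z,
          show K ((0 : R3).2.2, 0) = 0 from LK.z]; rfl
      filter_upwards [ev_comp I s3.cont z3, dG.right sG' zG', ev_comp hd s4.cont z4] with p h1 h2 h3
      exact h3.1 (h1.2 h2.symm)
    have := c32 (ε := -1) (h1 := fun p => (K p).1) (h2 := fun p => (K p).2)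
      (k1 := fun p => (H p).1)
      (k2 := fun p => (H p).2) hF' sQ' hQ' sG' LK.sm.fst LK.sm.snd LH.sm.fst LH.sm.snd
      zK1 zK2 zH1 zH2 LK.det hE r1 r2 (ch'.congr e3 e4 e1 e2)
    have cA : ContinuousAt (fun A : ℝ => ((A, 0, 0) : R3)) 0 := by fun_prop
    filter_upwards [this, ev_comp r3.eventually_nhds cA rfl] with A h1 h2
    have e : (fun X => D2 (D2 G) (A, 0, X)) =ᶠ[𝓝 0] fun X => - D3 (D3 G') (A, X, 0) := by
      filter_upwards [ev2 h2] with X hX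
      rw [hX]; ring
    rw [e.iteratedDeriv_eq]
    have : (fun X => - D3 (D3 G') (A, X, 0)) = - fun X => D3 (D3 G') (A, X, 0) := rfl
    rw [this, iteratedDeriv_neg, h1, neg_zero]

end PCR

namespace PCR

/-- third order derivative data of `f` at `x` -/
def J3 (f : ℝ → ℝ) (x d1 d2 d3 : ℝ) : Prop :=
  ∃ f1 f2 : ℝ → ℝ, (∀ᶠ s in 𝓝 x, HasDerivAt f (f1 s) s) ∧ (∀ᶠ s in 𝓝 x, HasDerivAt f1 (f2 s) s) ∧
    HasDerivAt f2 d3 x ∧ f1 x = d1 ∧ f2 x = d2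

theorem J3.vals {f : ℝ → ℝ} {x d1 d2 d3 : ℝ} (h : J3 f x d1 d2 d3) :
    deriv f x = d1 ∧ deriv (deriv f) x = d2 ∧ deriv (deriv (deriv f)) x = d3 := by
  obtain ⟨f1, f2, h1, h2, h3, rfl, rfl⟩ := h
  have := iter23 h1 h2 h3
  simpa only [iteratedDeriv_succ, iteratedDeriv_zero] using this

theorem J3.unique {f g : ℝ → ℝ} {x d1 d2 d3 e1 e2 e3 : ℝ} (h : J3 f x d1 d2 d3)
    (k : J3 g x e1 e2 e3) (e : f =ᶠ[𝓝 x] g) : d1 = e1 ∧ d2 = e2 ∧ d3 = e3 := by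
  obtain ⟨a1, a2, a3⟩ := h.vals
  obtain ⟨b1, b2, b3⟩ := k.vals
  rw [← a1, ← a2, ← a3, ← b1, ← b2, ← b3]
  exact ⟨e.deriv_eq, e.deriv.deriv_eq, e.deriv.deriv.deriv_eq⟩

theorem SM.J3 {f : ℝ → ℝ} {x : ℝ} (h : SM f x) :
    J3 f x (_root_.deriv f x) (_root_.deriv (_root_.deriv f) x)
      (_root_.deriv (_root_.deriv (_root_.deriv f)) x) :=
  ⟨_root_.deriv f, _root_.deriv (_root_.deriv f), h.ev.mono fun _ k => k.diff.hasDerivAt,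
    h.ev.mono fun _ k => k.deriv.diff.hasDerivAt, h.deriv.deriv.diff.hasDerivAt, rfl, rfl⟩

theorem J3.slice3 {F : R3 → ℝ} {a b x : ℝ} (h : SM F (a, b, x)) :
    J3 (fun s => F (a, b, s)) x (D3 F (a, b, x)) (D3 (D3 F) (a, b, x))
      (D3 (D3 (D3 F)) (a, b, x)) :=
  ⟨fun s => D3 F (a, b, s), fun s => D3 (D3 F) (a, b, s),
    (ev3 h.ev).mono fun _ h => PCR.slice3 h, (ev3 h.ev).mono fun _ h => PCR.slice3 h.D3,
    PCR.slice3 h.D3.D3, rfl, rfl⟩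

theorem J3.id (x : ℝ) : J3 (fun s => s) x 1 0 0 :=
  ⟨fun _ => 1, fun _ => 0, Eventually.of_forall fun s => hasDerivAt_id' s,
    Eventually.of_forall fun _ => hasDerivAt_const _ _, hasDerivAt_const _ _, rfl, rfl⟩

theorem J3.cont {f : ℝ → ℝ} {x d1 d2 d3 : ℝ} (h : J3 f x d1 d2 d3) : ContinuousAt f x := by
  obtain ⟨f1, f2, h1, -⟩ := h
  exact h1.self_of_nhds.continuousAt

theorem J3.mul {f g : ℝ → ℝ} {x d1 d2 d3 e1 e2 e3 : ℝ} (h : J3 f x d1 d2 d3)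
    (k : J3 g x e1 e2 e3) : J3 (fun s => f s * g s) x (d1 * g x + f x * e1)
      (d2 * g x + 2 * d1 * e1 + f x * e2) (d3 * g x + 3 * d2 * e1 + 3 * d1 * e2 + f x * e3) := by
  obtain ⟨f1, f2, h1, h2, h3, rfl, rfl⟩ := h
  obtain ⟨g1, g2, k1, k2, k3, rfl, rfl⟩ := k
  refine ⟨fun s => f1 s * g s + f s * g1 s, fun s => f2 s * g s + 2 * f1 s * g1 s + f s * g2 s,
    ?_, ?_, ?_, rfl, rfl⟩
  · filter_upwards [h1, k1] with s a b using a.mul b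
  · filter_upwards [h1, k1, h2, k2] with s a b c d
    refine ((c.mul b).add (a.mul d)).congr_deriv ?_
    ring
  · have a := h1.self_of_nhds
    have b := k1.self_of_nhds
    have c := h2.self_of_nhds
    have d := k2.self_of_nhds
    refine (((h3.mul b).add ((c.const_mul 2).mul d)).add (a.mul k3)).congr_deriv ?_
    ring

theorem J3.comp {f g : ℝ → ℝ} {x y d1 d2 d3 e1 e2 e3 : ℝ} (k : J3 g y e1 e2 e3)
    (h : J3 f x d1 d2 d3) (hy : f x = y) : J3 (fun s => g (f s)) x (e1 * d1)
      (e2 * d1 ^ 2 + e1 * d2) (e3 * d1 ^ 3 + 3 * e2 * d1 * d2 + e1 * d3) := by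
  have hc := h.cont
  subst hy
  obtain ⟨f1, f2, h1, h2, h3, rfl, rfl⟩ := h
  obtain ⟨g1, g2, k1, k2, k3, rfl, rfl⟩ := k
  refine ⟨fun s => g1 (f s) * f1 s, fun s => g2 (f s) * f1 s ^ 2 + g1 (f s) * f2 s,
    ?_, ?_, ?_, rfl, rfl⟩
  · filter_upwards [h1, hc.eventually k1] with s a b using b.comp s a
  · filter_upwards [h1, h2, hc.eventually k2] with s a b c
    refine ((c.comp s a).mul b).congr_deriv ?_
    simp only [Function.comp]
    ring
  · have a := h1.self_of_nhds
    have c := h2.self_of_nhds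
    have d := k2.self_of_nhds
    refine (((k3.comp x a).mul (c.pow 2)).add ((d.comp x a).mul h3)).congr_deriv ?_
    simp only [Function.comp, Pi.pow_apply]
    push_cast
    ring

theorem eq_self_of_deriv {u : ℝ → ℝ} (h : ∀ᶠ t in 𝓝 (0 : ℝ), HasDerivAt u 1 t) (h0 : u 0 = 0) :
    ∀ᶠ t in 𝓝 (0 : ℝ), u t = t := by
  obtain ⟨ε, hε, hb⟩ := Metric.eventually_nhds_iff_ball.1 h
  filter_upwards [Metric.ball_mem_nhds 0 hε] with t ht
  have hd : ∀ s ∈ Metric.ball (0 : ℝ) ε, HasDerivAt (fun s => u s - s) 0 s := fun s hs => by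
    exact ((hb s hs).sub (hasDerivAt_id' s)).congr_deriv (by ring)
  have := (convex_ball (0 : ℝ) ε).is_const_of_fderivWithin_eq_zero (𝕜 := ℝ)
    (f := fun s => u s - s) (fun s hs => (hd s hs).differentiableAt.differentiableWithinAt)
    (fun s hs => by
      rw [fderivWithin_of_isOpen Metric.isOpen_ball hs, (hd s hs).hasFDerivAt.fderiv]
      ext; simp) ht (Metric.mem_ball_self hε)
  simp only [h0] at this
  linarith

theorem nf_solve {C2 C3 : ℝ → ℝ} (s2 : SM C2 0) (s3 : SM C3 0) :
    ∃ τ l κ : ℝ → ℝ, SM τ 0 ∧ SM l 0 ∧ SM κ 0 ∧ τ 0 = 0 ∧ (∀ t, l t ≠ 0) ∧ (∀ t, κ t ≠ 0) ∧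
      ∀ᶠ a in 𝓝 (0 : ℝ), deriv τ a = κ a * l a ∧
        2 * C2 a * deriv τ a + deriv (deriv τ) a - 2 * κ a * deriv l a = 0 ∧
        6 * C3 a * deriv τ a + 6 * deriv (deriv τ) a * C2 a + deriv (deriv (deriv τ)) a
          - 6 * κ a * deriv l a * C2 a - 3 * κ a * deriv (deriv l) a = 0 := by
  let E := ℝ × ℝ × ℝ × ℝ × ℝ
  let σ : ℝ → ℝ → ℝ := fun t s => s ^ 2 / 2 + 12 * C3 t - 18 * C2 t ^ 2 - 6 * deriv C2 t
  let V : E → E := fun z => (1, σ z.1 z.2.1, C2 z.1 + z.2.1 / 2, z.2.1, Real.exp z.2.2.2.1)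
  have t1 : SM (fun z : E => z.1) 0 := SM.id.fst
  have t2 : SM (fun z : E => z.2.1) 0 := SM.id.snd.fst
  have t4 : SM (fun z : E => z.2.2.2.1) 0 := SM.id.snd.snd.snd.fst
  have c2 : SM (fun z : E => C2 z.1) 0 := s2.comp' t1 rfl
  have c3 : SM (fun z : E => C3 z.1) 0 := s3.comp' t1 rfl
  have c2' : SM (fun z : E => deriv C2 z.1) 0 := s2.deriv.comp' t1 rfl
  have sσ : SM (fun z : E => σ z.1 z.2.1) 0 :=
    ((((t2.pow 2).div (SM.const 2) (by norm_num)).add ((SM.const 12).mul c3)).sub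
      ((SM.const 18).mul (c2.pow 2))).sub ((SM.const 6).mul c2')
  have sV : SM V 0 := (SM.const 1).prodMk (sσ.prodMk ((c2.add (t2.div (SM.const 2)
    (by norm_num))).prodMk (t2.prodMk t4.exp)))
  obtain ⟨α, h1, h2, h3⟩ := ode sV
  have d1 : ∀ᶠ t in 𝓝 (0 : ℝ), HasDerivAt (fun t => (α t).1) 1 t :=
    h3.mono fun t h => h.fst
  have ha := eq_self_of_deriv d1 (by rw [h2]; rfl)
  let s : ℝ → ℝ := fun t => (α t).2.1
  let m : ℝ → ℝ := fun t => (α t).2.2.1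
  let n : ℝ → ℝ := fun t => (α t).2.2.2.1
  let τ : ℝ → ℝ := fun t => (α t).2.2.2.2
  have ss : SM s 0 := h1.snd.fst
  have sm : SM m 0 := h1.snd.snd.fst
  have sn : SM n 0 := h1.snd.snd.snd.fst
  have sτ : SM τ 0 := h1.snd.snd.snd.snd
  have ds : ∀ᶠ t in 𝓝 (0 : ℝ), HasDerivAt s (σ t (s t)) t := by
    filter_upwards [h3, ha] with t h e
    have := h.snd.fst
    simp only [V, e] at this
    exact this
  have dm : ∀ᶠ t in 𝓝 (0 : ℝ), HasDerivAt m (C2 t + s t / 2) t := by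
    filter_upwards [h3, ha] with t h e
    have := h.snd.snd.fst
    simp only [V, e] at this
    exact this
  have dn : ∀ᶠ t in 𝓝 (0 : ℝ), HasDerivAt n (s t) t := by
    filter_upwards [h3] with t h using h.snd.snd.snd.fst
  have dτ : ∀ᶠ t in 𝓝 (0 : ℝ), HasDerivAt τ (Real.exp (n t)) t := by
    filter_upwards [h3] with t h using h.snd.snd.snd.snd
  refine ⟨τ, fun t => Real.exp (m t), fun t => Real.exp (n t - m t), sτ, sm.exp, (sn.sub sm).exp,
    by simp only [τ, h2]; rfl, fun t => (Real.exp_pos _).ne', fun t => (Real.exp_pos _).ne', ?_⟩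
  filter_upwards [ds, dm.eventually_nhds, dn.eventually_nhds, dτ.eventually_nhds,
    s2.ev] with a b1 b2 b3 b4 b5
  have k1 := b2.self_of_nhds
  have k2 := b3.self_of_nhds
  have k3 := b4.self_of_nhds
  have hτ : J3 τ a (Real.exp (n a)) (Real.exp (n a) * s a)
      (Real.exp (n a) * s a * s a + Real.exp (n a) * σ a (s a)) :=
    ⟨fun t => Real.exp (n t), fun t => Real.exp (n t) * s t, b4, b3.mono fun t h => h.exp,
      k2.exp.mul b1, rfl, rfl⟩
  have dC : HasDerivAt C2 (deriv C2 a) a := b5.diff.hasDerivAt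
  have hl1 : ∀ᶠ t in 𝓝 a, HasDerivAt (fun t => Real.exp (m t))
    (Real.exp (m t) * (C2 t + s t / 2)) t := b2.mono fun t h => h.exp
  have hl2 := k1.exp.mul (dC.add (b1.div_const 2))
  have e1 : deriv (fun t => Real.exp (m t)) =ᶠ[𝓝 a] fun t => Real.exp (m t) * (C2 t + s t / 2) :=
    hl1.mono fun t h => h.deriv
  obtain ⟨v1, v2, v3⟩ := hτ.vals
  rw [v1, v2, v3, e1.deriv_eq, e1.self_of_nhds]
  rw [show deriv (fun t => Real.exp (m t) * (C2 t + s t / 2)) a = _ from hl2.deriv]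
  have hx : Real.exp (n a) = Real.exp (n a - m a) * Real.exp (m a) := by
    rw [← Real.exp_add]; congr 1; ring
  refine ⟨hx, ?_, ?_⟩
  · rw [hx]; ring
  · rw [hx]; simp only [σ, Pi.add_apply]; ring

end PCR

namespace PCR

theorem scal {l τ : ℝ → ℝ} (sl : SM l 0) (sτ : SM τ 0) (z : τ 0 = 0) (hl : l 0 ≠ 0)
    (hτ : deriv τ 0 ≠ 0) : ∃ Φi, LDP (fun p => (l p.2 * p.1, τ p.2)) Φi ∧
      E2 (fun p => (Φi p).2) 0 ≠ 0 := by
  have s1 : SM (fun p : ℝ × ℝ => l p.2 * p.1) 0 := (sl.comp' SM.id.snd rfl).mul SM.id.fst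
  have s2 : SM (fun p : ℝ × ℝ => τ p.2) 0 := sτ.comp' SM.id.snd rfl
  have e1 : E1 (fun p : ℝ × ℝ => l p.2 * p.1) 0 = l 0 :=
    (slice21 (a := 0) (b := 0) s1).unique (((hasDerivAt_id' 0).const_mul (l 0)).congr_deriv (by simp))
  have e2 : E2 (fun p : ℝ × ℝ => τ p.2) 0 = deriv τ 0 :=
    (slice22 (a := 0) (b := 0) s2).unique sτ.diff.hasDerivAt
  have e3 : E1 (fun p : ℝ × ℝ => τ p.2) 0 = 0 :=
    (slice21 (a := 0) (b := 0) s2).unique (hasDerivAt_const (0 : ℝ) (τ 0))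
  obtain ⟨Φi, h⟩ := LDP.mk' s1 s2 (by simp) z (by
    rw [e1, e2, e3]; simp [hl, hτ])
  refine ⟨Φi, h, ?_⟩
  have c : ContinuousAt (fun t : ℝ => ((0, t) : ℝ × ℝ)) 0 := by fun_prop
  have h1 := ev_comp h.li c rfl
  have k := chain2 (f := fun p => (Φi p).2) (c1 := fun _ => 0) (c2 := τ) (t := 0)
    (by rw [z]; exact h.sm'.snd) (hasDerivAt_const _ _) sτ.diff.hasDerivAt
  have k2 := k.unique ((hasDerivAt_id' 0).congr_of_eventuallyEq (h1.mono fun t ht => by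
    simp only [mul_zero] at ht
    simp [ht]))
  intro h0
  rw [z] at k2
  rw [show ((0 : ℝ), (0 : ℝ)) = 0 from rfl, h0] at k2
  simp at k2

theorem com2 {F : R3 → ℝ} {p : R3} (h : SM F p) : D2 (D3 (D3 F)) =ᶠ[𝓝 p] D3 (D3 (D2 F)) :=
  (D23_comm_ev h.D3).trans (D3_congr (D23_comm_ev h))

theorem com3 {F : R3 → ℝ} {p : R3} (h : SM F p) :
    D2 (D3 (D3 (D3 F))) =ᶠ[𝓝 p] D3 (D3 (D3 (D2 F))) :=
  (D23_comm_ev h.D3.D3).trans (D3_congr (com2 h))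

theorem com23 {F : R3 → ℝ} {p : R3} (h : SM F p) :
    D2 (D2 (D3 (D3 (D3 F)))) =ᶠ[𝓝 p] D3 (D3 (D3 (D2 (D2 F)))) :=
  (D2_congr (com3 h)).trans (com3 h.D2)

open Asymptotics in
theorem phi_taylor {F : R3 → ℝ} (hF : N2 F)
    (v1 : ∀ᶠ A in 𝓝 (0 : ℝ), iteratedDeriv 3 (fun B => D3 (D3 F) (A, B, 0)) 0 = 0)
    (v2 : ∀ᶠ A in 𝓝 (0 : ℝ), iteratedDeriv 3 (fun X => D2 (D2 F) (A, 0, X)) 0 = 0) :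
    ∀ᶠ a in 𝓝 (0 : ℝ),
      ((fun b => D3 (D3 F) (a, b, 0) - 2 * (D2 (D2 (D3 (D3 F))) (a, 0, 0) / 4) * b ^ 2)
        =o[𝓝 0] fun b => b ^ 3) ∧
      ((fun b => D3 (D3 (D3 F)) (a, b, 0) - 6 * (D2 (D2 (D2 (D3 (D3 (D3 F))))) (a, 0, 0) / 36)
        * b ^ 3) =o[𝓝 0] fun b => b ^ 3) := by
  have c3 : ContinuousAt (fun p : R3 => ((p.1, 0, p.2.2) : R3)) 0 := by fun_prop
  have cA : ContinuousAt (fun A : ℝ => ((A, 0, 0) : R3)) 0 := by fun_prop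
  have st : ∀ {f : R3 → ℝ} {c : ℝ}, SM f 0 → (∀ᶠ p : R3 in 𝓝 0, f (p.1, 0, p.2.2) = c) →
      ∀ᶠ p : R3 in 𝓝 0, D3 f (p.1, 0, p.2.2) = 0 := by
    intro f c sf hf
    filter_upwards [hf.eventually_nhds, ev_comp sf.ev c3 rfl] with p h1 h2
    exact (slice3 h2).unique ((hasDerivAt_const _ _).congr_of_eventuallyEq (ev3 h1))
  have f2 := st hF.sm.D3 (flat3 hF.sm hF.i1)
  have f3 := st hF.sm.D3.D3 f2
  have g1 : ∀ᶠ p : R3 in 𝓝 0, D3 (D2 F) (p.1, 0, p.2.2) = 1 := by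
    filter_upwards [hF.ii2.eventually_nhds, ev_comp hF.sm.ev c3 rfl] with p h1 h2
    exact (slice3 h2.D2).unique ((hasDerivAt_id' _).congr_of_eventuallyEq (ev3 h1))
  have g2 := st hF.sm.D2.D3 g1
  have g3 := st hF.sm.D2.D3.D3 g2
  filter_upwards [v1, v2, ev_comp f2 cA rfl, ev_comp f3 cA rfl, ev_comp g2 cA rfl,
    ev_comp g3 cA rfl, ev_comp hF.sm.ev cA rfl] with a a1 a2 a3 a4 a5 a6 a7
  rw [(iter_slice3 a7.D2.D2).2.2] at a2
  have sl : SM (fun b : ℝ => ((a, b, 0) : R3)) 0 := (SM.const a).prodMk (SM.id.prodMk (SM.const 0))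
  have w2 := iter_slice2 a7.D3.D3
  have w3 := iter_slice2 a7.D3.D3.D3
  constructor
  · have t := taylor3 (t := 0) (SM.comp (f := fun b : ℝ => ((a, b, 0) : R3)) a7.D3.D3 sl)
    rw [a1, w2.1, w2.2.1, (com2 a7).self_of_nhds, a3, a5] at t
    simp only [sub_zero] at t
    exact t.congr_left fun b => by ring
  · have t := taylor3 (t := 0) (SM.comp (f := fun b : ℝ => ((a, b, 0) : R3)) a7.D3.D3.D3 sl)
    rw [w3.1, w3.2.1, w3.2.2, (com3 a7).self_of_nhds, (com23 a7).self_of_nhds, a2, a4, a6] at t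
    simp only [sub_zero] at t
    exact t.congr_left fun b => by ring

theorem core {F G : R3 → ℝ} {τ l κ : ℝ → ℝ} (hF : N2 F) (sG : SM G 0) (sτ : SM τ 0) (sl : SM l 0)
    (sκ : SM κ 0) (zτ : τ 0 = 0)
    (hE : ∀ᶠ p : R3 in 𝓝 0, τ (F p) = G (τ p.1, κ p.1 * p.2.1, l (F p) * p.2.2)) :
    ∀ᶠ p : R3 in 𝓝 0,
      deriv τ p.1 * p.2.1 = D3 G (τ p.1, κ p.1 * p.2.1, 0) * l p.1 ∧
      deriv (deriv τ) p.1 * p.2.1 ^ 2 + deriv τ p.1 * D3 (D3 F) (p.1, p.2.1, 0) =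
        D3 (D3 G) (τ p.1, κ p.1 * p.2.1, 0) * l p.1 ^ 2
          + D3 G (τ p.1, κ p.1 * p.2.1, 0) * (2 * deriv l p.1 * p.2.1) ∧
      deriv (deriv (deriv τ)) p.1 * p.2.1 ^ 3 + 3 * deriv (deriv τ) p.1 * p.2.1
          * D3 (D3 F) (p.1, p.2.1, 0) + deriv τ p.1 * D3 (D3 (D3 F)) (p.1, p.2.1, 0) =
        D3 (D3 (D3 G)) (τ p.1, κ p.1 * p.2.1, 0) * l p.1 ^ 3
          + 3 * D3 (D3 G) (τ p.1, κ p.1 * p.2.1, 0) * l p.1 * (2 * deriv l p.1 * p.2.1)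
          + D3 G (τ p.1, κ p.1 * p.2.1, 0) * (3 * (deriv (deriv l) p.1 * p.2.1 ^ 2
            + deriv l p.1 * D3 (D3 F) (p.1, p.2.1, 0))) := by
  have c2 : ContinuousAt (fun p : R3 => ((p.1, p.2.1, 0) : R3)) 0 := by fun_prop
  have c1 : ContinuousAt (fun p : R3 => p.1) 0 := by fun_prop
  have sT : SM (fun p : R3 => ((τ p.1, κ p.1 * p.2.1, 0) : R3)) 0 :=
    (sτ.comp' SM.id.fst rfl).prodMk (((sκ.comp' SM.id.fst rfl).mul SM.id.snd.fst).prodMk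
      (SM.const 0))
  have zT : ((τ (0 : R3).1, κ (0 : R3).1 * (0 : R3).2.1, 0) : R3) = 0 := by simp [zτ]
  filter_upwards [ev_comp hE.eventually_nhds c2 rfl, hF.i2, hF.ii1, ev_comp hF.sm.ev c2 rfl,
    ev_comp sG.ev sT.cont zT, ev_comp sτ.ev c1 rfl, ev_comp sl.ev c1 rfl] with
    ⟨a, b, x⟩ h1 h2 h3 h4 h5 h6 h7
  simp only at h2 h3 h4 h5 h6 h7 ⊢
  have jF := J3.slice3 h4
  have jL := h6.J3.comp jF h2
  have jl := (h7.J3.comp jF h2).mul (J3.id 0)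
  have jG := (J3.slice3 h5).comp jl (mul_zero _)
  have := jL.unique jG (ev3 h1)
  rw [h2, h3] at this
  obtain ⟨u1, u2, u3⟩ := this
  refine ⟨?_, ?_, ?_⟩
  · rw [u1]; ring
  · rw [u2]; ring
  · rw [u3]; ring

open Asymptotics in
theorem s2 {F : R3 → ℝ} (hF : N2 F)
    (v1 : ∀ᶠ A in 𝓝 (0 : ℝ), iteratedDeriv 3 (fun B => D3 (D3 F) (A, B, 0)) 0 = 0)
    (v2 : ∀ᶠ A in 𝓝 (0 : ℝ), iteratedDeriv 3 (fun X => D2 (D2 F) (A, 0, X)) 0 = 0) :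
    ∃ G Φ Ψ Φi Ψi, N2 G ∧ Inc G F Φ Ψ ∧ LDP Φ Φi ∧ LDP Ψ Ψi ∧ ∀ᶠ A in 𝓝 (0 : ℝ),
      ((fun B => D3 (D3 G) (A, B, 0)) =o[𝓝 0] fun B => B ^ 3) ∧
      ((fun B => D3 (D3 (D3 G)) (A, B, 0)) =o[𝓝 0] fun B => B ^ 3) := by
  have sA : SM (fun A : ℝ => ((A, 0, 0) : R3)) 0 := SM.id.prodMk ((SM.const 0).prodMk (SM.const 0))
  obtain ⟨τ, l, κ, sτ, sl, sκ, zτ, l0, κ0, hs⟩ := nf_solve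
    (C2 := fun a => D2 (D2 (D3 (D3 F))) (a, 0, 0) / 4)
    (C3 := fun a => D2 (D2 (D2 (D3 (D3 (D3 F))))) (a, 0, 0) / 36)
    ((hF.sm.D3.D3.D2.D2.comp' sA rfl).div (SM.const 4) (by norm_num))
    ((hF.sm.D3.D3.D3.D2.D2.D2.comp' sA rfl).div (SM.const 36) (by norm_num))
  have τ1 : deriv τ 0 ≠ 0 := by
    rw [hs.self_of_nhds.1]; exact mul_ne_zero (κ0 0) (l0 0)
  obtain ⟨Φi, LΦ, nΦ⟩ := scal sl sτ zτ (l0 0) τ1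
  obtain ⟨Ψi, LΨ, -⟩ := scal sκ sτ zτ (κ0 0) τ1
  have d3 : D3 F 0 = 0 := (flat3 hF.sm hF.i1).self_of_nhds
  obtain ⟨G, sG, zG, I⟩ := push hF.sm hF.z d3 LΦ.sm' LΦ.z' LΨ.sm' LΨ.z' nΦ
  have J := I.symm LΦ LΨ
  have hE := J.eq hF.sm hF.z
  simp only at hE
  have hc := core hF sG sτ sl sκ zτ hE
  have cΦ : ContinuousAt (fun p : R3 => Φi (p.2.2, p.1)) 0 :=
    (LΦ.sm'.comp' (SM.id.snd.snd.prodMk SM.id.fst) rfl).cont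
  have cΨ : ContinuousAt (fun p : R3 => Ψi (p.2.1, p.1)) 0 :=
    (LΨ.sm'.comp' (SM.id.snd.fst.prodMk SM.id.fst) rfl).cont
  have rΦ : ∀ᶠ p : R3 in 𝓝 0, l (Φi (p.2.2, p.1)).2 * (Φi (p.2.2, p.1)).1 = p.2.2 ∧
      τ (Φi (p.2.2, p.1)).2 = p.1 := by
    have c : ContinuousAt (fun p : R3 => (p.2.2, p.1)) 0 := by fun_prop
    filter_upwards [ev_comp LΦ.ri c rfl] with p hp
    exact ⟨congrArg Prod.fst hp, congrArg Prod.snd hp⟩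
  have rΨ : ∀ᶠ p : R3 in 𝓝 0, κ (Ψi (p.2.1, p.1)).2 * (Ψi (p.2.1, p.1)).1 = p.2.1 ∧
      τ (Ψi (p.2.1, p.1)).2 = p.1 := by
    have c : ContinuousAt (fun p : R3 => (p.2.1, p.1)) 0 := by fun_prop
    filter_upwards [ev_comp LΨ.ri c rfl] with p hp
    exact ⟨congrArg Prod.fst hp, congrArg Prod.snd hp⟩
  have qΦ : ContinuousAt (fun p : R3 => (((Φi (p.2.2, p.1)).2, 0, (Φi (p.2.2, p.1)).1) : R3)) 0 :=
    cΦ.snd.prodMk (continuousAt_const.prodMk cΦ.fst)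
  have qΨ : ContinuousAt (fun p : R3 => (((Ψi (p.2.1, p.1)).2, (Ψi (p.2.1, p.1)).1, 0) : R3)) 0 :=
    cΨ.snd.prodMk (cΨ.fst.prodMk continuousAt_const)
  have zΦ : (((Φi ((0 : R3).2.2, (0 : R3).1)).2, 0, (Φi ((0 : R3).2.2, (0 : R3).1)).1) : R3) = 0 := by
    rw [show Φi ((0 : R3).2.2, (0 : R3).1) = 0 from LΦ.z']; rfl
  have zΨ : (((Ψi ((0 : R3).2.1, (0 : R3).1)).2, (Ψi ((0 : R3).2.1, (0 : R3).1)).1, 0) : R3) = 0 := by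
    rw [show Ψi ((0 : R3).2.1, (0 : R3).1) = 0 from LΨ.z']; rfl
  -- the conditions (i) and (ii)
  have i1 : ∀ᶠ p : R3 in 𝓝 0, G (p.1, 0, p.2.2) = p.1 := by
    filter_upwards [ev_comp hE qΦ zΦ, ev_comp hF.i1 qΦ zΦ, rΦ] with p h1 h2 h3
    rw [h2, mul_zero, h3.1, h3.2] at h1
    exact h1.symm
  have i2 : ∀ᶠ p : R3 in 𝓝 0, G (p.1, p.2.1, 0) = p.1 := by
    filter_upwards [ev_comp hE qΨ zΨ, ev_comp hF.i2 qΨ zΨ, rΨ] with p h1 h2 h3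
    rw [h2, mul_zero, h3.1, h3.2] at h1
    exact h1.symm
  have p1 : ContinuousAt (fun p : R3 => p.1) 0 := by fun_prop
  have ii1 : ∀ᶠ p : R3 in 𝓝 0, D3 G (p.1, p.2.1, 0) = p.2.1 := by
    filter_upwards [ev_comp hc qΨ zΨ, ev_comp (ev_comp hs p1 rfl) qΨ zΨ, rΨ] with p h1 h2 h3
    have e := h1.1
    rw [h2.1, h3.1, h3.2] at e
    have := l0 (Ψi (p.2.1, p.1)).2
    rw [← h3.1]
    rw [h3.1]
    refine mul_right_cancel₀ this ?_
    rw [← e]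
    linear_combination l (Ψi (p.2.1, p.1)).2 * h3.1
  have f3 := flat3 sG i1
  have ii2 : ∀ᶠ p : R3 in 𝓝 0, D2 G (p.1, 0, p.2.2) = p.2.2 := by
    have c3 : ContinuousAt (fun p : R3 => ((p.1, 0, p.2.2) : R3)) 0 := by fun_prop
    filter_upwards [ev_comp hE.eventually_nhds qΦ zΦ, ev_comp hF.i1 qΦ zΦ, ev_comp hF.ii2 qΦ zΦ,
      ev_comp (ev_comp hs p1 rfl) qΦ zΦ, rΦ, f3, ev_comp hF.sm.ev qΦ zΦ, ev_comp sG.ev c3 rfl,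
      ev_comp (ev_comp sτ.ev p1 rfl) qΦ zΦ, ev_comp (ev_comp sl.ev p1 rfl) qΦ zΦ] with
      p h1 h2 h3 h4 h5 h6 h7 h8 h9 h10
    generalize Φi (p.2.2, p.1) = w at *
    obtain ⟨x, a⟩ := w
    obtain ⟨A, B, X⟩ := p
    simp only at *
    obtain ⟨h5, h5'⟩ := h5
    have k1 := (h9.diff.hasDerivAt)
    have dF := slice2 h7
    have k2 : HasDerivAt (fun s => τ (F (a, s, x))) (deriv τ a * D2 F (a, 0, x)) 0 := by
      have : HasDerivAt τ (deriv τ a) (F (a, 0, x)) := by rw [h2]; exact k1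
      exact this.comp 0 dF
    have k3 : HasDerivAt (fun s => l (F (a, s, x))) (deriv l a * D2 F (a, 0, x)) 0 := by
      have : HasDerivAt l (deriv l a) (F (a, 0, x)) := by rw [h2]; exact h10.diff.hasDerivAt
      exact this.comp 0 dF
    have k4 := chain3 (f := G) (c1 := fun _ => τ a) (c2 := fun s => κ a * s)
      (c3 := fun s => l (F (a, s, x)) * x) (t := 0) (by
        rw [h2, mul_zero, h5, h5']; exact h8) (hasDerivAt_const _ _)
      ((hasDerivAt_id' (0 : ℝ)).const_mul (κ a)) (k3.mul_const x)
    have k5 := k2.unique (k4.congr_of_eventuallyEq (ev2 h1))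
    rw [h3, h2, mul_zero (κ a), h5, h5', h6, h4.1] at k5
    refine mul_right_cancel₀ (κ0 a) ?_
    linear_combination -k5 + κ a * h5
  refine ⟨G, _, _, Φi, Ψi, ⟨sG, zG, i1, i2, ii1, ii2⟩, J, LΦ, LΨ, ?_⟩
  -- the higher order conditions
  have pt := phi_taylor hF v1 v2
  have cA : ContinuousAt (fun A : ℝ => (Φi (0, A)).2) 0 :=
    (LΦ.sm'.comp' (f := fun A : ℝ => ((0, A) : ℝ × ℝ)) ((SM.const 0).prodMk SM.id) rfl).snd.cont
  have zA : (Φi (0, 0)).2 = 0 := by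
    rw [show Φi (0, 0) = 0 from LΦ.z']; rfl
  have main : ∀ᶠ a in 𝓝 (0 : ℝ), ((fun B => D3 (D3 G) (τ a, B, 0)) =o[𝓝 0] fun B => B ^ 3) ∧
      ((fun B => D3 (D3 (D3 G)) (τ a, B, 0)) =o[𝓝 0] fun B => B ^ 3) := by
    filter_upwards [pt, hs, ev_comp hc.eventually_nhds sA.cont rfl] with a a1 a2 a3
    obtain ⟨o2, o3⟩ := a1
    obtain ⟨b1, b2, b3⟩ := a2
    have e := ev2 a3
    simp only at e
    have hl := l0 a
    have hκ := κ0 a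
    have D1 : ∀ᶠ b in 𝓝 (0 : ℝ), D3 G (τ a, κ a * b, 0) = κ a * b := by
      filter_upwards [e] with b hb
      refine mul_right_cancel₀ hl ?_
      rw [← hb.1, b1]; ring
    have r2 : (fun b => D3 (D3 G) (τ a, κ a * b, 0)) =o[𝓝 0] fun b => b ^ 3 := by
      refine (o2.const_mul_left (deriv τ a / l a ^ 2)).congr' ?_ EventuallyEq.rfl
      filter_upwards [e, D1] with b hb hd
      have u := hb.2.1
      rw [hd] at u
      refine mul_right_cancel₀ (pow_ne_zero 2 hl) ?_
      rw [div_mul_eq_mul_div, div_mul_cancel₀ _ (pow_ne_zero 2 hl)]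
      linear_combination u - b ^ 2 * b2
    have r3 : (fun b => D3 (D3 (D3 G)) (τ a, κ a * b, 0)) =o[𝓝 0] fun b => b ^ 3 := by
      have bb : (fun b : ℝ => b) =O[𝓝 0] fun _ => (1 : ℝ) :=
        (continuousAt_id (x := (0 : ℝ))).isBigO_one ℝ
      have m1 := bb.mul_isLittleO o2
      have m2 := bb.mul_isLittleO r2
      simp only [one_mul] at m1 m2
      have m3 := ((o3.const_mul_left (deriv τ a)).add (m1.const_mul_left
        (3 * deriv (deriv τ) a - 3 * κ a * deriv l a))).sub (m2.const_mul_left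
          (6 * l a * deriv l a))
      refine (m3.const_mul_left (1 / l a ^ 3)).congr' ?_ EventuallyEq.rfl
      filter_upwards [e, D1] with b hb hd
      have u := hb.2.2
      rw [hd] at u
      refine mul_right_cancel₀ (pow_ne_zero 3 hl) ?_
      rw [div_mul_eq_mul_div, div_mul_cancel₀ _ (pow_ne_zero 3 hl)]
      linear_combination u - b ^ 3 * b3
    have tr : ∀ {g : ℝ → ℝ}, ((fun b => g (κ a * b)) =o[𝓝 0] fun b => b ^ 3) →
        g =o[𝓝 0] fun b => b ^ 3 := by
      intro g hg
      have t : Tendsto (fun B : ℝ => B / κ a) (𝓝 0) (𝓝 0) := by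
        have : ContinuousAt (fun B : ℝ => B / κ a) 0 := by fun_prop
        simpa [ContinuousAt] using this
      have k := hg.comp_tendsto t
      have k2 : g =o[𝓝 0] fun B : ℝ => (1 / κ a ^ 3) * B ^ 3 := by
        refine k.congr (fun B => ?_) (fun B => ?_)
        · simp only [Function.comp]; rw [mul_div_cancel₀ _ hκ]
        · simp only [Function.comp]; rw [div_pow]; ring
      exact k2.of_const_mul_right
    exact ⟨tr r2, tr r3⟩
  have cA3 : ContinuousAt (fun A : ℝ => ((A, 0, 0) : R3)) 0 := sA.cont
  filter_upwards [ev_comp main cA zA, ev_comp rΦ cA3 rfl] with A h1 h2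
  rw [h2.2] at h1
  exact h1

end PCR

namespace PCR

theorem LDP.toDiffeo {Φ Φ' : ℝ × ℝ → ℝ × ℝ} (h : LDP Φ Φ') : SmoothLocalDiffeoAtZero Φ := by
  obtain ⟨W, hW, oW, zW⟩ := eventually_nhds_iff.1 (h.li.and h.sm)
  obtain ⟨W', hW', oW', zW'⟩ := eventually_nhds_iff.1 (h.ri.and h.sm')
  have cW : ContinuousOn Φ W := fun p hp => (hW p hp).2.continuousAt.continuousWithinAt
  have cW' : ContinuousOn Φ' W' := fun p hp => (hW' p hp).2.continuousAt.continuousWithinAt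
  have oV : IsOpen (W ∩ Φ ⁻¹' W') := cW.isOpen_inter_preimage oW oW'
  have oV' : IsOpen (W' ∩ Φ' ⁻¹' W) := cW'.isOpen_inter_preimage oW' oW
  have im : Φ '' (W ∩ Φ ⁻¹' W') = W' ∩ Φ' ⁻¹' W := by
    ext q
    constructor
    · rintro ⟨p, ⟨h1, h2⟩, rfl⟩
      refine ⟨h2, ?_⟩
      change Φ' (Φ p) ∈ W
      rw [(hW p h1).1]; exact h1
    · rintro ⟨h1, h2⟩
      refine ⟨Φ' q, ⟨h2, ?_⟩, (hW' q h1).1⟩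
      change Φ (Φ' q) ∈ W'
      rw [(hW' q h1).1]; exact h1
  refine ⟨W ∩ Φ ⁻¹' W', oV.mem_nhds ⟨zW, ?_⟩, h.z, ?_, ?_, ?_, Φ', ?_, ?_⟩
  · change Φ 0 ∈ W'
    rw [h.z]; exact zW'
  · exact fun p hp => (hW p hp.1).2.contDiffWithinAt
  · intro p hp q hq e
    rw [← (hW p hp.1).1, ← (hW q hq.1).1, e]
  · rw [im]; exact oV'
  · rw [im]; exact fun p hp => (hW' p hp.1).2.contDiffWithinAt
  · exact fun p hp => (hW p hp.1).1

theorem LDP.swap : LDP Prod.swap Prod.swap := by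
  have s : SM (Prod.swap : ℝ × ℝ → ℝ × ℝ) 0 := SM.id.snd.prodMk SM.id.fst
  exact ⟨s, s, rfl, rfl, Eventually.of_forall fun _ => rfl, Eventually.of_forall fun _ => rfl⟩

theorem D3_sub {f g : R3 → ℝ} {p : R3} (hf : SM f p) (hg : SM g p) :
    D3 (fun q => f q - g q) p = D3 f p - D3 g p := by
  unfold D3
  rw [fderiv_fun_sub hf.diff hg.diff]; rfl

theorem D2_sub {f g : R3 → ℝ} {p : R3} (hf : SM f p) (hg : SM g p) :
    D2 (fun q => f q - g q) p = D2 f p - D2 g p := by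
  unfold D2
  rw [fderiv_fun_sub hf.diff hg.diff]; rfl

theorem D1_sub {f g : R3 → ℝ} {p : R3} (hf : SM f p) (hg : SM g p) :
    D1 (fun q => f q - g q) p = D1 f p - D1 g p := by
  unfold D1
  rw [fderiv_fun_sub hf.diff hg.diff]; rfl

/-- the model -/
def mo (p : R3) : ℝ := p.1 + p.2.1 * p.2.2

theorem mo_sm (p : R3) : SM mo p := SM.id.fst.add (SM.id.snd.fst.mul SM.id.snd.snd)

theorem mo_D1 : D1 mo = fun _ => 1 := by
  funext ⟨a, b, x⟩
  refine (slice1 (mo_sm _)).unique ?_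
  have := (hasDerivAt_id' a).add_const (b * x)
  exact this

theorem mo_D2 : D2 mo = fun p => p.2.2 := by
  funext ⟨a, b, x⟩
  refine (slice2 (mo_sm _)).unique ?_
  have := ((hasDerivAt_id' b).mul_const x).const_add a
  exact this.congr_deriv (by simp)

theorem mo_D3 : D3 mo = fun p => p.2.1 := by
  funext ⟨a, b, x⟩
  refine (slice3 (mo_sm _)).unique ?_
  have := ((hasDerivAt_id' x).const_mul b).const_add a
  exact this.congr_deriv (by simp)

theorem D3_snd_fst : D3 (fun p => p.2.1) = fun _ => 0 := by
  funext ⟨a, b, x⟩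
  exact (slice3 SM.id.snd.fst).unique (hasDerivAt_const x b)

theorem D3_zero : D3 (fun _ => 0) = fun _ => 0 := by
  funext ⟨a, b, x⟩
  exact (slice3 (SM.const 0)).unique (hasDerivAt_const x _)

theorem D2_snd_fst : D2 (fun p => p.2.1) = fun _ => 1 := by
  funext ⟨a, b, x⟩
  exact (slice2 SM.id.snd.fst).unique (hasDerivAt_id' b)

theorem reg_of {f : R3 → ℝ} (s : SM f 0) (z : f 0 = 0) (h1 : iteratedFDeriv ℝ 1 f 0 = 0)
    (h2 : iteratedFDeriv ℝ 2 f 0 = 0) : Reg (fun p => mo p + f p) := by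
  have e : (fun p => mo p + f p) = fun p => mo p - (-f p) := by funext p; ring
  have k1 : ∀ v, fderiv ℝ f 0 v = 0 := fun v => by
    have := congrArg (fun m => m ![v]) h1
    simpa [iteratedFDeriv_one_apply] using this
  have k2 : D2 (D3 f) 0 = 0 := by
    have := congrArg (fun m => m ![((0, 1, 0) : R3), ((0, 0, 1) : R3)]) h2
    simp only [iteratedFDeriv_two_apply] at this
    unfold D2 D3
    rw [fderiv_clm_apply s.fderiv.diff (differentiableAt_const _)]
    simpa using this
  have en : D3 (fun p => -f p) = fun p => 0 - D3 f p := by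
    funext p; unfold D3; rw [fderiv_fun_neg]; simp
  refine ⟨(mo_sm 0).add s, by simp [mo, z], ?_, ?_, ?_, ?_⟩
  · rw [e, D1_sub (mo_sm 0) s.neg, mo_D1]; simp [D1, k1]
  · rw [e, D2_sub (mo_sm 0) s.neg, mo_D2]; simp [D2, k1]
  · rw [e, D3_sub (mo_sm 0) s.neg, mo_D3]; simp [D3, k1]
  · have : D3 (fun p => mo p + f p) =ᶠ[𝓝 0] fun p => p.2.1 - (0 - D3 f p) := by
      filter_upwards [s.ev] with p hp
      rw [e, D3_sub (mo_sm p) hp.neg, mo_D3, en]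
    rw [D2_congr this |>.self_of_nhds, D2_sub SM.id.snd.fst ((SM.const 0).sub s.D3), D2_sub (SM.const 0) s.D3, k2,
      D2_snd_fst]
    simp [D2]

open Asymptotics in
theorem nf_conditions {G : R3 → ℝ} (hG : N2 G)
    (ho : ∀ᶠ A in 𝓝 (0 : ℝ), ((fun B => D3 (D3 G) (A, B, 0)) =o[𝓝 0] fun B => B ^ 3) ∧
      ((fun B => D3 (D3 (D3 G)) (A, B, 0)) =o[𝓝 0] fun B => B ^ 3))
    {fs : ℝ → ℝ → ℝ → ℝ} (hfs : ∀ A B X, fs A B X = G (A, B, X) - mo (A, B, X)) :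
    ∃ δ : ℝ, 0 < δ ∧
        (∀ A ∈ Ioo (-δ) δ, ∀ B ∈ Ioo (-δ) δ, fs A B 0 = 0) ∧
        (∀ A ∈ Ioo (-δ) δ, ∀ Xv ∈ Ioo (-δ) δ, fs A 0 Xv = 0) ∧
        (∀ A ∈ Ioo (-δ) δ, ∀ B ∈ Ioo (-δ) δ,
          deriv (fun t => fs A B t) 0 = 0) ∧
        (∀ A ∈ Ioo (-δ) δ, ∀ Xv ∈ Ioo (-δ) δ,
          deriv (fun s => fs A s Xv) 0 = 0) ∧
        (∀ A ∈ Ioo (-δ) δ,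
          iteratedDeriv 2 (fun s => iteratedDeriv 2 (fun t => fs A s t) 0) 0 = 0) ∧
        (∀ A ∈ Ioo (-δ) δ,
          iteratedDeriv 2 (fun s => iteratedDeriv 3 (fun t => fs A s t) 0) 0 = 0) ∧
        (∀ A ∈ Ioo (-δ) δ,
          iteratedDeriv 3 (fun s => iteratedDeriv 2 (fun t => fs A s t) 0) 0 = 0) ∧
        (∀ A ∈ Ioo (-δ) δ,
          iteratedDeriv 3 (fun s => iteratedDeriv 3 (fun t => fs A s t) 0) 0 = 0) := by
  obtain ⟨δ1, p1, q1⟩ := Metric.eventually_nhds_iff.1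
    (hG.i1.and (hG.i2.and (hG.ii1.and (hG.ii2.and hG.sm.ev))))
  obtain ⟨δ2, p2, q2⟩ := Metric.eventually_nhds_iff.1 ho
  have hm : ∀ {A B X : ℝ}, A ∈ Ioo (-(min δ1 δ2)) (min δ1 δ2) → B ∈ Ioo (-(min δ1 δ2)) (min δ1 δ2) →
      X ∈ Ioo (-(min δ1 δ2)) (min δ1 δ2) → dist ((A, B, X) : R3) 0 < δ1 := by
    intro A B X hA hB hX
    rw [mem_Ioo, ← abs_lt] at hA hB hX
    have l := min_le_left δ1 δ2
    simp only [dist_zero_right, Prod.norm_def, Real.norm_eq_abs, sup_lt_iff]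
    exact ⟨hA.trans_le l, hB.trans_le l, hX.trans_le l⟩
  have h0 : (0 : ℝ) ∈ Ioo (-(min δ1 δ2)) (min δ1 δ2) := by
    have := lt_min p1 p2
    exact ⟨by linarith, this⟩
  have s3 : ∀ {A B X}, SM G (A, B, X) → deriv (fun t => fs A B t) X = D3 G (A, B, X) - B ∧
      iteratedDeriv 2 (fun t => fs A B t) X = D3 (D3 G) (A, B, X) ∧
      iteratedDeriv 3 (fun t => fs A B t) X = D3 (D3 (D3 G)) (A, B, X) := by
    intro A B X h
    have sH : SM (fun p => G p - mo p) (A, B, X) := h.sub (mo_sm _)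
    have e1 : ∀ᶠ p in 𝓝 (A, B, X), D3 (fun p => G p - mo p) p = D3 G p - p.2.1 := by
      filter_upwards [h.ev] with p hp
      rw [D3_sub hp (mo_sm p), mo_D3]
    have e2 : ∀ᶠ p in 𝓝 (A, B, X), D3 (D3 (fun p => G p - mo p)) p = D3 (D3 G) p := by
      filter_upwards [D3_congr e1, h.ev] with p hp h'
      rw [hp, D3_sub h'.D3 SM.id.snd.fst, D3_snd_fst, sub_zero]
    have e3 := (D3_congr e2).self_of_nhds
    have := iter_slice3 sH
    simp only [hfs]
    rw [this.1, this.2.1, this.2.2, e1.self_of_nhds, e2.self_of_nhds, e3]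
    exact ⟨rfl, rfl, rfl⟩
  have key : ∀ A ∈ Ioo (-(min δ1 δ2)) (min δ1 δ2), 
      (iteratedDeriv 2 (fun s => iteratedDeriv 2 (fun t => fs A s t) 0) 0 = 0 ∧
       iteratedDeriv 3 (fun s => iteratedDeriv 2 (fun t => fs A s t) 0) 0 = 0) ∧
      (iteratedDeriv 2 (fun s => iteratedDeriv 3 (fun t => fs A s t) 0) 0 = 0 ∧
       iteratedDeriv 3 (fun s => iteratedDeriv 3 (fun t => fs A s t) 0) 0 = 0) := by
    intro A hA
    have sm := (q1 (hm hA h0 h0)).2.2.2.2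
    have hA2 : dist A 0 < δ2 := by
      rw [dist_zero_right, Real.norm_eq_abs]
      exact (abs_lt.2 hA).trans_le (min_le_right _ _)
    obtain ⟨o2, o3⟩ := q2 hA2
    have ev := ev2 sm.ev
    have sl : SM (fun B : ℝ => ((A, B, 0) : R3)) 0 :=
      (SM.const A).prodMk (SM.id.prodMk (SM.const 0))
    have E2 : (fun s => iteratedDeriv 2 (fun t => fs A s t) 0) =ᶠ[𝓝 0]
        fun B => D3 (D3 G) (A, B, 0) := by
      filter_upwards [ev] with B hB using (s3 hB).2.1
    have E3 : (fun s => iteratedDeriv 3 (fun t => fs A s t) 0) =ᶠ[𝓝 0]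
        fun B => D3 (D3 (D3 G)) (A, B, 0) := by
      filter_upwards [ev] with B hB using (s3 hB).2.2
    have t2 := taylor3_unique (c0 := 0) (c1 := 0) (c2 := 0) (c3 := 0)
      (sm.D3.D3.comp' sl rfl) (by simpa using o2)
    have t3 := taylor3_unique (c0 := 0) (c1 := 0) (c2 := 0) (c3 := 0)
      (sm.D3.D3.D3.comp' sl rfl) (by simpa using o3)
    rw [E2.iteratedDeriv_eq, E2.iteratedDeriv_eq, E3.iteratedDeriv_eq, E3.iteratedDeriv_eq]
    refine ⟨⟨?_, ?_⟩, ?_, ?_⟩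
    · simpa using t2.2.2.1
    · simpa using t2.2.2.2
    · simpa using t3.2.2.1
    · simpa using t3.2.2.2
  refine ⟨min δ1 δ2, lt_min p1 p2, ?_, ?_, ?_, ?_, fun A hA => (key A hA).1.1,
    fun A hA => (key A hA).2.1, fun A hA => (key A hA).1.2, fun A hA => (key A hA).2.2⟩
  · intro A hA B hB
    have := (q1 (hm hA hB h0)).2.1
    simp only at this
    rw [hfs, this]; simp [mo]
  · intro A hA X hX
    have := (q1 (hm hA h0 hX)).1
    simp only at this
    rw [hfs, this]; simp [mo]
  · intro A hA B hB
    have := q1 (hm hA hB h0)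
    rw [(s3 this.2.2.2.2).1, this.2.2.1]; simp
  · intro A hA X hX
    have := q1 (hm hA h0 hX)
    simp only [hfs]
    rw [(iter_slice2 (F := fun p => G p - mo p) (this.2.2.2.2.sub (mo_sm _))).1,
      D2_sub this.2.2.2.2 (mo_sm _), mo_D2, this.2.2.2.1]
    simp

theorem final (f : ℝ → ℝ → ℝ → ℝ) (U : Set (ℝ × ℝ × ℝ))
    (hU : U ∈ nhds (0 : ℝ × ℝ × ℝ))
    (hsmooth : ContDiffOn ℝ (⊤ : ℕ∞) (fun p : ℝ × ℝ × ℝ => f p.1 p.2.1 p.2.2) U)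
    (h0 : f 0 0 0 = 0)
    (h1 : iteratedFDeriv ℝ 1 (fun p : ℝ × ℝ × ℝ => f p.1 p.2.1 p.2.2) 0 = 0)
    (h2 : iteratedFDeriv ℝ 2 (fun p : ℝ × ℝ × ℝ => f p.1 p.2.1 p.2.2) 0 = 0) :
    ∃ G Φ Ψ Φi Ψi, N2 G ∧ LDP Φ Φi ∧ LDP Ψ Ψi ∧
      (∀ᶠ A in 𝓝 (0 : ℝ), ((fun B => D3 (D3 G) (A, B, 0)) =o[𝓝 0] fun B => B ^ 3) ∧
        ((fun B => D3 (D3 (D3 G)) (A, B, 0)) =o[𝓝 0] fun B => B ^ 3)) ∧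
      ∀ᶠ p : R3 in 𝓝 0, (Φ (p.2.2, p.1 + p.2.1 * p.2.2 + f p.1 p.2.1 p.2.2)).2 =
        G ((Ψ (p.2.1, p.1)).2, (Ψ (p.2.1, p.1)).1,
          (Φ (p.2.2, p.1 + p.2.1 * p.2.2 + f p.1 p.2.1 p.2.2)).1) := by
  have s : SM (fun p : R3 => f p.1 p.2.1 p.2.2) 0 := by
    filter_upwards [eventually_mem_nhds_iff.2 hU] with p hp
    exact hsmooth.contDiffAt hp
  have R := reg_of s h0 h1 h2
  obtain ⟨G1, H, K, Hi, Ki, n1, I1, LH, LK, v1, v2⟩ := s1 R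
  obtain ⟨G, Φ, Ψ, Φi, Ψi, n, I, LΦ, LΨ, ho⟩ := s2 n1 v1 v2
  have I1' := I1.symm LH.symm LK.symm
  have I2 := I.trans I1' LH.sm' LH.z' LK.sm' LK.z'
  exact ⟨G, _, _, _, _, n, LH.symm.comp LΦ, LK.symm.comp LΨ, ho, I2.eq R.sm R.z⟩

end PCR

end

/-- Chern–Moser type convergence theorem for regular para-CR hypersurfaces:
a smooth defining function `F = a + bx + f`, with `f` vanishing to second
order at `0`, can be taken by smooth local changes of coordinates
`(x,y) ↦ (X,Y)` and `(a,b) ↦ (A,B)` (both fixing the origin) to the normal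
form `Y = A + B·X + f*(A,B,X)`, where `f*` satisfies (i)–(v). -/
theorem stmt5 (f : ℝ → ℝ → ℝ → ℝ) (U : Set (ℝ × ℝ × ℝ))
    (hU : U ∈ nhds (0 : ℝ × ℝ × ℝ))
    (hsmooth : ContDiffOn ℝ (⊤ : ℕ∞) (fun p : ℝ × ℝ × ℝ => f p.1 p.2.1 p.2.2) U)
    (h0 : f 0 0 0 = 0)
    (h1 : iteratedFDeriv ℝ 1 (fun p : ℝ × ℝ × ℝ => f p.1 p.2.1 p.2.2) 0 = 0)
    (h2 : iteratedFDeriv ℝ 2 (fun p : ℝ × ℝ × ℝ => f p.1 p.2.1 p.2.2) 0 = 0) :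
    ∃ (Xm Ym Am Bm : ℝ → ℝ → ℝ) (fs : ℝ → ℝ → ℝ → ℝ),
      -- (x,y) ↦ (X,Y) is a smooth local diffeomorphism fixing 0
      SmoothLocalDiffeoAtZero (fun p : ℝ × ℝ => (Xm p.1 p.2, Ym p.1 p.2)) ∧
      -- (a,b) ↦ (A,B) is a smooth local diffeomorphism fixing 0
      SmoothLocalDiffeoAtZero (fun p : ℝ × ℝ => (Am p.1 p.2, Bm p.1 p.2)) ∧
      -- f* is smooth near 0
      (∃ Uf : Set (ℝ × ℝ × ℝ), Uf ∈ nhds (0 : ℝ × ℝ × ℝ) ∧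
        ContDiffOn ℝ (⊤ : ℕ∞) (fun p : ℝ × ℝ × ℝ => fs p.1 p.2.1 p.2.2) Uf) ∧
      -- the transformed hypersurface equation holds near 0
      (∀ᶠ p : ℝ × ℝ × ℝ in nhds 0,
        Ym p.2.2 (p.1 + p.2.1 * p.2.2 + f p.1 p.2.1 p.2.2) =
          Am p.1 p.2.1 +
            Bm p.1 p.2.1 * Xm p.2.2 (p.1 + p.2.1 * p.2.2 + f p.1 p.2.1 p.2.2) +
            fs (Am p.1 p.2.1) (Bm p.1 p.2.1)
              (Xm p.2.2 (p.1 + p.2.1 * p.2.2 + f p.1 p.2.1 p.2.2))) ∧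
      -- normal form conditions (i)–(v) for f*
      (∃ δ : ℝ, 0 < δ ∧
        (∀ A ∈ Ioo (-δ) δ, ∀ B ∈ Ioo (-δ) δ, fs A B 0 = 0) ∧
        (∀ A ∈ Ioo (-δ) δ, ∀ Xv ∈ Ioo (-δ) δ, fs A 0 Xv = 0) ∧
        (∀ A ∈ Ioo (-δ) δ, ∀ B ∈ Ioo (-δ) δ,
          deriv (fun t => fs A B t) 0 = 0) ∧
        (∀ A ∈ Ioo (-δ) δ, ∀ Xv ∈ Ioo (-δ) δ,
          deriv (fun s => fs A s Xv) 0 = 0) ∧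
        (∀ A ∈ Ioo (-δ) δ,
          iteratedDeriv 2 (fun s => iteratedDeriv 2 (fun t => fs A s t) 0) 0 = 0) ∧
        (∀ A ∈ Ioo (-δ) δ,
          iteratedDeriv 2 (fun s => iteratedDeriv 3 (fun t => fs A s t) 0) 0 = 0) ∧
        (∀ A ∈ Ioo (-δ) δ,
          iteratedDeriv 3 (fun s => iteratedDeriv 2 (fun t => fs A s t) 0) 0 = 0) ∧
        (∀ A ∈ Ioo (-δ) δ,
          iteratedDeriv 3 (fun s => iteratedDeriv 3 (fun t => fs A s t) 0) 0 = 0)) := by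
  obtain ⟨G, Φ, Ψ, Φi, Ψi, n, LΦ, LΨ, ho, hE⟩ := PCR.final f U hU hsmooth h0 h1 h2
  refine ⟨fun x y => (Φ (x, y)).1, fun x y => (Φ (x, y)).2, fun a b => (Ψ (b, a)).2,
    fun a b => (Ψ (b, a)).1, fun A B X => G (A, B, X) - PCR.mo (A, B, X), LΦ.toDiffeo,
    ((PCR.LDP.swap.comp LΨ).comp PCR.LDP.swap).toDiffeo, ?_, ?_,
    PCR.nf_conditions n ho (fun _ _ _ => rfl)⟩
  · exact ⟨_, n.sm.sub (PCR.mo_sm 0), fun p hp => ContDiffAt.contDiffWithinAt hp⟩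
  · filter_upwards [hE] with p hp
    simp only [PCR.mo]
    linear_combination hp
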